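/- arXiv:1310.0838 — 3 statements merged into one kernel-verified Lean document; each statement's English description precedes it below -/
import Mathlib

section
/- Let Γ be a finite simple graph and G a finite group acting on Γ by automorphisms, and let χ_{Γ,G} be the polynomial with χ_{Γ,G}(n) = |Col_n(Γ)/G| for all integers n ≥ 1. Then for all integers n ≥ 1, χ_{Γ,G}(-n) = (-1)^{|V|} · |Σ_{n,+}(Γ)/G|, the number of G-orbits of even weakly compatible pairs of an n-coloring and an acyclic orientation, up to sign. -/
/-- An orientation of a simple graph `Γ`: an assignment of a head vertex to every edge,
which is a vertex of that edge. -/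
def GraphOri {V : Type*} (Γ : SimpleGraph V) : Type _ :=
  {σ : Γ.edgeSet → V // ∀ e : Γ.edgeSet, σ e ∈ (e : Sym2 V)}

/-- The directed adjacency relation induced by an orientation: `u → v` iff `uv` is an
edge with head `v`. -/
def dirAdj {V : Type*} (Γ : SimpleGraph V) (σ : GraphOri Γ) (u v : V) : Prop :=
  ∃ h : Γ.Adj u v, σ.1 ⟨s(u, v), Γ.mem_edgeSet.mpr h⟩ = v

/-- An orientation is acyclic if it has no directed cycles, i.e. no vertex admits a
nonempty directed path back to itself. -/
def oriAcyclic {V : Type*} (Γ : SimpleGraph V) (σ : GraphOri Γ) : Prop :=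
  ∀ v : V, ¬ Relation.TransGen (dirAdj Γ σ) v v

/-- `oriSMulEq Γ hact g σ σ'` says that `σ' = g • σ`, where `(g • σ)(uv) = g • σ(g⁻¹ • uv)`.
In particular `oriSMulEq Γ hact g σ σ` says that `σ` is fixed by `g`. -/
def oriSMulEq {V G : Type*} [Group G] [MulAction G V] (Γ : SimpleGraph V)
    (hact : ∀ (g : G) (u v : V), Γ.Adj u v → Γ.Adj (g • u) (g • v))
    (g : G) (σ σ' : GraphOri Γ) : Prop :=
  ∀ (u v : V) (h : Γ.Adj u v),
    σ'.1 ⟨s(u, v), Γ.mem_edgeSet.mpr h⟩ =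
      g • σ.1 ⟨s(g⁻¹ • u, g⁻¹ • v), Γ.mem_edgeSet.mpr (hact g⁻¹ u v h)⟩

/-- A coloring `c` and an orientation `σ` are weakly compatible if every edge `uv` with
`c(u) < c(v)` is oriented towards `v`. -/
def weakCompat {V : Type*} (Γ : SimpleGraph V) {n : ℕ} (c : V → Fin n)
    (σ : GraphOri Γ) : Prop :=
  ∀ (u v : V) (h : Γ.Adj u v), c u < c v → σ.1 ⟨s(u, v), Γ.mem_edgeSet.mpr h⟩ = v

/- quotient poset relation for Γ^σ_g -/
def quotDirRel {V G : Type*} [Group G] [MulAction G V] (Γ : SimpleGraph V)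
    (g : G) (σ : GraphOri Γ)
    (a b : Quotient (MulAction.orbitRel (Subgroup.zpowers g) V)) : Prop :=
  ∃ u v : V, Quotient.mk (MulAction.orbitRel (Subgroup.zpowers g) V) u = a ∧
    Quotient.mk (MulAction.orbitRel (Subgroup.zpowers g) V) v = b ∧
    Relation.TransGen (dirAdj Γ σ) u v


namespace Recip
open Finset

theorem exists_antidiff (d : Polynomial ℚ) (a : ℚ) :
    ∃ q : Polynomial ℚ, q.eval 0 = a ∧ ∀ x : ℚ, q.eval (x + 1) = q.eval x + d.eval x := by
  have h : ∃ q : Polynomial ℚ, ∀ x : ℚ, q.eval (x + 1) = q.eval x + d.eval x := by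
    induction d using Polynomial.induction_on' with
    | add p q hp hq =>
      obtain ⟨p', hp'⟩ := hp
      obtain ⟨q', hq'⟩ := hq
      refine ⟨p' + q', fun x => ?_⟩
      simp only [Polynomial.eval_add, hp', hq']; ring
    | monomial k b =>
      refine ⟨Polynomial.C (b / (k + 1)) * Polynomial.bernoulli (k + 1), fun x => ?_⟩
      have := Polynomial.bernoulli_eval_one_add (k + 1) x
      rw [add_comm x 1]
      simp only [Polynomial.eval_mul, Polynomial.eval_C, this, Polynomial.eval_monomial]
      have : (k : ℚ) + 1 ≠ 0 := by positivity
      push_cast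
      field_simp
  obtain ⟨q, hq⟩ := h
  refine ⟨q + Polynomial.C (a - q.eval 0), by simp, fun x => ?_⟩
  simp only [Polynomial.eval_add, hq, Polynomial.eval_C]; ring

set_option linter.unusedSectionVars false

variable {W : Type*} [Fintype W] [DecidableEq W]

/-- proper colorings of the induced subgraph on `S` by colors `1, …, n`; color `0` off `S`. -/
def PS (adj : W → W → Prop) (n : ℕ) (S : Finset W) : Set (W → ℕ) :=
  {c | (∀ v, c v ≠ 0 ↔ v ∈ S) ∧ (∀ v, c v ≤ n) ∧
    ∀ u v, u ∈ S → v ∈ S → adj u v → c u ≠ c v}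

/-- weakly compatible pairs on the induced subgraph on `S`. -/
def QS (adj : W → W → Prop) (n : ℕ) (S : Finset W) : Set ((W → ℕ) × (W → W → Prop)) :=
  {x | (∀ v, x.1 v ≠ 0 ↔ v ∈ S) ∧ (∀ v, x.1 v ≤ n) ∧
    (∀ u v, x.2 u v → u ∈ S ∧ v ∈ S ∧ adj u v ∧ x.1 u ≤ x.1 v) ∧
    (∀ u v, u ∈ S → v ∈ S → adj u v → x.2 u v ∨ x.2 v u) ∧
    ∀ v, ¬ Relation.TransGen x.2 v v}

theorem fin_bdd (n : ℕ) : {c : W → ℕ | ∀ v, c v ≤ n}.Finite := by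
  have : {c : W → ℕ | ∀ v, c v ≤ n} = Set.pi Set.univ (fun _ => Set.Iic n) := by
    ext c; simp [Pi.le_def]
  rw [this]
  exact Set.Finite.pi fun _ => Set.finite_Iic n

theorem PS_finite (adj : W → W → Prop) (n : ℕ) (S : Finset W) : (PS adj n S).Finite :=
  (fin_bdd n).subset fun _ hc => hc.2.1

theorem QS_finite (adj : W → W → Prop) (n : ℕ) (S : Finset W) : (QS adj n S).Finite :=
  ((fin_bdd (W := W) n).prod (Set.finite_univ (α := W → W → Prop))).subset
    fun _ hc => ⟨hc.2.1, trivial⟩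

def indep (adj : W → W → Prop) (I : Finset W) : Prop := ∀ u ∈ I, ∀ v ∈ I, ¬ adj u v

open Classical in
theorem PS_rec (adj : W → W → Prop) (hs : ∀ u v, adj u v → adj v u) (n : ℕ) (S : Finset W) :
    (PS adj (n + 1) S).ncard =
      ∑ I ∈ S.powerset with indep adj I, (PS adj n (S \ I)).ncard := by
  rw [Set.ncard_eq_toFinset_card _ (PS_finite adj (n+1) S)]
  rw [Finset.card_eq_sum_card_fiberwise (f := fun c => S.filter (fun v => c v = n + 1))
    (t := S.powerset.filter (indep adj))]
  · refine Finset.sum_congr rfl fun I hI => ?_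
    rw [Set.ncard_eq_toFinset_card _ (PS_finite adj n (S \ I))]
    simp only [mem_filter, mem_powerset] at hI
    obtain ⟨hIS, hI⟩ := hI
    refine Finset.card_bij' (fun c _ => fun v => if v ∈ I then 0 else c v)
      (fun c _ => fun v => if v ∈ I then n + 1 else c v) ?_ ?_ ?_ ?_
    · intro c hc
      simp only [mem_filter, Set.Finite.mem_toFinset] at hc ⊢
      obtain ⟨⟨h1, h2, h3⟩, rfl⟩ := hc
      refine ⟨fun v => ?_, fun v => ?_, fun u v hu hv huv => ?_⟩
      · have := h1 v
        simp only [mem_filter, mem_sdiff]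
        split_ifs <;> simp_all
      · have := h2 v
        have := h1 v
        simp only [mem_filter]
        split_ifs with h
        · simp
        · by_cases hv : v ∈ S
          · have : c v ≠ n + 1 := fun h' => h ⟨hv, h'⟩
            omega
          · have : c v = 0 := by by_contra h'; exact hv (this.1 h')
            omega
      · simp only [mem_sdiff] at hu hv
        simp only [hu.2, hv.2, if_false]
        exact h3 u v hu.1 hv.1 huv
    · intro c hc
      simp only [mem_filter, Set.Finite.mem_toFinset] at hc ⊢
      obtain ⟨h1, h2, h3⟩ := hc
      refine ⟨⟨fun v => ?_, fun v => ?_, fun u v hu hv huv => ?_⟩, ?_⟩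
      · have := h1 v
        have := @hIS v
        dsimp only
        split_ifs <;> simp_all
      · have := h2 v
        dsimp only
        split_ifs <;> omega
      · have := h2 v
        have := h2 u
        have := h3 u v
        have := hI u
        dsimp only
        split_ifs with a b b
        · exact absurd huv (this a v b)
        · omega
        · omega
        · simp_all
      · ext v
        have := h2 v
        have := @hIS v
        simp only [mem_filter]
        split_ifs with a
        · simp_all
        · simp only [a, iff_false]
          rintro ⟨_, h⟩; omega
    · intro c hc
      simp only [mem_filter, Set.Finite.mem_toFinset] at hc ⊢
      obtain ⟨⟨h1, h2, h3⟩, rfl⟩ := hc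
      funext v
      simp only [mem_filter]
      split_ifs <;> simp_all
    · intro c hc
      simp only [Set.Finite.mem_toFinset] at hc ⊢
      obtain ⟨h1, h2, h3⟩ := hc
      funext v
      have h0 : v ∈ I → c v = 0 := fun hv => by
        by_contra h0
        exact (Finset.mem_sdiff.1 ((h1 v).1 h0)).2 hv
      by_cases hv : v ∈ I
      · simp [hv, h0 hv]
      · simp [hv]
  · intro c hc
    simp only [Set.Finite.coe_toFinset] at hc
    obtain ⟨h1, h2, h3⟩ := hc
    simp only [coe_filter, Set.mem_ofPred_eq, mem_powerset, filter_subset, true_and]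
    intro u hu v hv huv
    simp only [mem_filter] at hu hv
    exact h3 u v hu.1 hv.1 huv (hu.2.trans hv.2.symm)

open Classical in
/-- sinks of top color -/
noncomputable def topSinks (n : ℕ) (S : Finset W) (x : (W → ℕ) × (W → W → Prop)) : Finset W :=
  S.filter fun v => x.1 v = n + 1 ∧ ∀ w, ¬ x.2 v w

open Classical in
theorem QS_card_aux (adj : W → W → Prop) (hs : ∀ u v, adj u v → adj v u) (n : ℕ) (S I : Finset W)
    (hIS : I ⊆ S) (hI : indep adj I) :
    (QS adj (n + 1) (S \ I)).ncard =
      ((QS_finite adj (n+1) S).toFinset.filter fun x => I ⊆ topSinks n S x).card := by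
  rw [Set.ncard_eq_toFinset_card _ (QS_finite adj (n+1) (S \ I))]
  refine Finset.card_bij'
    (fun x _ => (fun v => if v ∈ I then n + 1 else x.1 v,
      fun u v => x.2 u v ∨ (v ∈ I ∧ u ∈ S ∧ u ∉ I ∧ adj u v)))
    (fun x _ => (fun v => if v ∈ I then 0 else x.1 v, fun u v => x.2 u v ∧ v ∉ I)) ?_ ?_ ?_ ?_
  · rintro ⟨c, r⟩ hx
    simp only [mem_filter, Set.Finite.mem_toFinset] at hx ⊢
    obtain ⟨h1, h2, h3, h4, h5⟩ := hx
    dsimp only at h1 h2 h3 h4 h5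
    refine ⟨⟨fun v => ?_, fun v => ?_, fun u v huv => ?_, fun u v hu hv huv => ?_, fun v hv => ?_⟩, ?_⟩
    · have := h1 v
      have := @hIS v
      dsimp only
      split_ifs <;> simp_all
    · have := h2 v
      dsimp only
      split_ifs <;> omega
    · dsimp only at huv ⊢
      rcases huv with h | ⟨h, h', h'', h'''⟩
      · have := h3 u v h
        simp_all
      · refine ⟨h', hIS h, h''', ?_⟩
        have := h2 u
        simp_all
    · dsimp only
      by_cases hu' : u ∈ I <;> by_cases hv' : v ∈ I
      · exact absurd huv (hI u hu' v hv')
      · exact Or.inr (Or.inr ⟨hu', hv, hv', hs _ _ huv⟩)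
      · exact Or.inl (Or.inr ⟨hv', hu, hu', huv⟩)
      · rcases h4 u v (by simp [*]) (by simp [*]) huv with h | h
        · exact Or.inl (Or.inl h)
        · exact Or.inr (Or.inl h)
    · dsimp only at hv
      have key : ∀ a b, Relation.TransGen
          (fun u v => r u v ∨ (v ∈ I ∧ u ∈ S ∧ u ∉ I ∧ adj u v)) a b →
          (a ∉ I) ∧ (b ∉ I → Relation.TransGen r a b) := by
        intro a b hab
        induction hab with
        | single h =>
          rcases h with h | h
          · refine ⟨?_, fun _ => .single h⟩
            have := h3 _ _ h
            simp at this; exact this.1.2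
          · exact ⟨h.2.2.1, fun h' => absurd h.1 h'⟩
        | tail _ h ih =>
          refine ⟨ih.1, fun hc => ?_⟩
          rcases h with h | h
          · have := h3 _ _ h
            simp at this
            exact (ih.2 this.1.2).tail h
          · exact absurd h.1 hc
      have := key v v hv
      exact h5 v (this.2 this.1)
    · intro v hv
      simp only [topSinks, mem_filter]
      refine ⟨hIS hv, by simp [hv], fun w hw => ?_⟩
      rcases hw with h | h
      · have := h3 _ _ h
        simp at this; exact this.1.2 hv
      · exact h.2.2.1 hv
  · rintro ⟨c, r⟩ hx
    simp only [mem_filter, Set.Finite.mem_toFinset] at hx ⊢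
    obtain ⟨⟨h1, h2, h3, h4, h5⟩, h6⟩ := hx
    dsimp only at h1 h2 h3 h4 h5
    have h6' : ∀ v ∈ I, c v = n + 1 ∧ ∀ w, ¬ r v w := fun v hv => by
      have := h6 hv; simp only [topSinks, mem_filter] at this; exact this.2
    refine ⟨fun v => ?_, fun v => ?_, fun u v huv => ?_, fun u v hu hv huv => ?_, fun v hv => ?_⟩
    · have := h1 v
      dsimp only
      split_ifs <;> simp_all
    · have := h2 v
      dsimp only
      split_ifs <;> omega
    · dsimp only at huv ⊢
      have := h3 u v huv.1
      have hu : u ∉ I := fun hu => (h6' u hu).2 v huv.1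
      simp_all
    · simp only [mem_sdiff] at hu hv
      have := h4 u v hu.1 hv.1 huv
      simp_all
    · exact h5 v (Relation.TransGen.mono (fun _ _ h => h.1) _ _ hv)
  · rintro ⟨c, r⟩ hx
    simp only [Set.Finite.mem_toFinset] at hx
    obtain ⟨h1, h2, h3, h4, h5⟩ := hx
    dsimp only at h1 h2 h3 h4 h5
    ext1
    · funext v
      have h0 : v ∈ I → c v = 0 := fun hv => by
        by_contra h0
        exact (Finset.mem_sdiff.1 ((h1 v).1 h0)).2 hv
      by_cases hv : v ∈ I
      · simp [hv, h0 hv]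
      · simp [hv]
    · funext u v
      have := h3 u v
      simp only [mem_sdiff] at this
      apply propext
      dsimp only
      tauto
  · rintro ⟨c, r⟩ hx
    simp only [mem_filter, Set.Finite.mem_toFinset] at hx
    obtain ⟨⟨h1, h2, h3, h4, h5⟩, h6⟩ := hx
    dsimp only at h1 h2 h3 h4 h5
    have h6' : ∀ v ∈ I, c v = n + 1 ∧ ∀ w, ¬ r v w := fun v hv => by
      have := h6 hv; simp only [topSinks, mem_filter] at this; exact this.2
    ext1
    · funext v
      have := h6' v
      by_cases hv : v ∈ I <;> simp_all
    · funext u v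
      apply propext
      dsimp only
      constructor
      · rintro (h | ⟨hv, hu, hu', h⟩)
        · exact h.1
        · rcases h4 u v hu (hIS hv) h with h | h
          · exact h
          · exact absurd h ((h6' v hv).2 u)
      · intro h
        by_cases hv : v ∈ I
        · right
          have := h3 u v h
          exact ⟨hv, this.1, fun hu => (h6' u hu).2 v h, this.2.2.1⟩
        · exact Or.inl ⟨h, hv⟩

theorem topSinks_empty (adj : W → W → Prop) (n : ℕ) (S : Finset W)
    (x : (W → ℕ) × (W → W → Prop)) (hx : x ∈ QS adj (n + 1) S) :
    topSinks n S x = ∅ ↔ x ∈ QS adj n S := by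
  obtain ⟨c, r⟩ := x
  obtain ⟨h1, h2, h3, h4, h5⟩ := hx
  dsimp only at h1 h2 h3 h4 h5
  constructor
  · intro h
    refine ⟨h1, fun v => ?_, h3, h4, h5⟩
    by_contra hv
    have hv : c v = n + 1 := by have := h2 v; dsimp only at hv; omega
    have wf : WellFounded (fun a b => Relation.TransGen r b a) := by
      have : IsTrans W (fun a b => Relation.TransGen r b a) := ⟨fun _ _ _ h h' => h'.trans h⟩
      have : Std.Irrefl (fun a b => Relation.TransGen r b a) := ⟨fun a h => h5 a h⟩
      exact Finite.wellFounded_of_trans_of_irrefl _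
    obtain ⟨m, hm, hmin⟩ := wf.has_min {v | c v = n + 1} ⟨v, hv⟩
    have : m ∈ topSinks n S (c, r) := by
      simp only [topSinks, mem_filter]
      have hm' : c m = n + 1 := hm
      refine ⟨(h1 m).1 (by omega), hm, fun w hw => hmin w ?_ (.single hw)⟩
      have := (h3 m w hw).2.2.2
      have := h2 w
      simp only [Set.mem_ofPred_eq]; omega
    rw [h] at this
    simp at this
  · intro h
    ext v
    have := h.2.1 v
    simp only [topSinks, mem_filter]
    dsimp only at this
    constructor
    · rintro ⟨_, h, _⟩; omega
    · simp

open Classical in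
theorem QS_rec (adj : W → W → Prop) (hs : ∀ u v, adj u v → adj v u) (n : ℕ) (S : Finset W) :
    ((QS adj n S).ncard : ℤ) =
      ∑ I ∈ S.powerset with indep adj I, (-1) ^ I.card * ((QS adj (n + 1) (S \ I)).ncard : ℤ) := by
  set X := (QS_finite adj (n+1) S).toFinset with hX
  have e1 : ∑ I ∈ S.powerset with indep adj I, (-1) ^ I.card * ((QS adj (n + 1) (S \ I)).ncard : ℤ)
      = ∑ I ∈ S.powerset, ∑ x ∈ X, if I ⊆ topSinks n S x then (-1 : ℤ) ^ I.card else 0 := by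
    rw [Finset.sum_filter]
    refine Finset.sum_congr rfl fun I hI => ?_
    rw [mem_powerset] at hI
    split_ifs with h
    · rw [QS_card_aux adj hs n S I hI h, ← Finset.sum_filter, Finset.sum_const]
      simp [mul_comm]; rfl
    · symm
      apply Finset.sum_eq_zero
      intro x hx
      rw [if_neg]
      intro h'
      apply h
      intro u hu v hv huv
      have hu' := h' hu
      have hv' := h' hv
      simp only [topSinks, mem_filter] at hu' hv'
      simp only [hX, Set.Finite.mem_toFinset] at hx
      rcases hx.2.2.2.1 u v hu'.1 hv'.1 huv with h | h
      · exact hu'.2.2 _ h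
      · exact hv'.2.2 _ h
  rw [e1, Finset.sum_comm]
  have e2 : ∀ x ∈ X, (∑ I ∈ S.powerset, if I ⊆ topSinks n S x then (-1 : ℤ) ^ I.card else 0)
      = if x ∈ QS adj n S then 1 else 0 := by
    intro x hx
    rw [← Finset.sum_filter]
    have : S.powerset.filter (fun I => I ⊆ topSinks n S x) = (topSinks n S x).powerset := by
      ext I
      simp only [mem_filter, mem_powerset]
      exact ⟨fun h => h.2, fun h => ⟨h.trans (Finset.filter_subset _ _), h⟩⟩
    rw [this, Finset.sum_powerset_neg_one_pow_card]
    simp only [hX, Set.Finite.mem_toFinset] at hx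
    simp only [topSinks_empty adj n S x hx]
  rw [Finset.sum_congr rfl e2, ← Finset.sum_filter, Set.ncard_eq_toFinset_card _ (QS_finite adj n S)]
  simp only [Finset.sum_const, smul_eq_mul, nsmul_eq_mul, mul_one, Nat.cast_inj]
  congr 1
  ext x
  simp only [hX, mem_filter, Set.Finite.mem_toFinset]
  refine ⟨fun h => ⟨⟨h.1, fun v => (h.2.1 v).trans (Nat.le_succ n), h.2.2⟩, h⟩, fun h => h.2⟩

theorem zero_case (adj : W → W → Prop) (S : Finset W) :
    ((PS adj 0 S).ncard : ℚ) = (-1) ^ S.card * (QS adj 0 S).ncard := by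
  rcases S.eq_empty_or_nonempty with rfl | ⟨v, hv⟩
  · have h1 : PS adj 0 ∅ = {fun _ => 0} := by
      ext c
      simp only [PS, Set.mem_ofPred_eq, Set.mem_singleton_iff]
      constructor
      · intro h; funext v; simpa using h.1 v
      · rintro rfl; simp
    have h2 : QS adj 0 ∅ = {(fun _ => 0, fun _ _ => False)} := by
      ext ⟨c, r⟩
      simp only [QS, Set.mem_ofPred_eq, Set.mem_singleton_iff, Prod.mk.injEq]
      constructor
      · intro h
        refine ⟨by funext v; simpa using h.1 v, ?_⟩
        funext u v
        simpa using fun h' => (h.2.2.1 u v h').1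
      · rintro ⟨rfl, rfl⟩
        refine ⟨by simp, by simp, by simp, by simp, fun v hv => ?_⟩
        cases hv <;> assumption
    rw [h1, h2]; simp
  · have h1 : PS adj 0 S = ∅ := by
      ext c
      simp only [Set.mem_empty_iff_false, iff_false]
      intro h
      exact (h.1 v).2 hv (Nat.le_zero.1 (h.2.1 v))
    have h2 : QS adj 0 S = ∅ := by
      ext c
      simp only [Set.mem_empty_iff_false, iff_false]
      intro h
      exact (h.1 v).2 hv (Nat.le_zero.1 (h.2.1 v))
    rw [h1, h2]; simp

open Classical in
theorem recip (adj : W → W → Prop) (hs : ∀ u v, adj u v → adj v u) (S : Finset W) :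
    ∃ q : Polynomial ℚ, ∀ n : ℕ, q.eval (n : ℚ) = (PS adj n S).ncard ∧
      q.eval (-(n : ℚ)) = (-1) ^ S.card * (QS adj n S).ncard := by
  induction S using Finset.strongInduction with
  | H S ih =>
    choose! Q hQ using ih
    let J := (S.powerset.filter (indep adj)).erase ∅
    have hJ : ∀ I ∈ J, S \ I ⊂ S := by
      intro I hI
      simp only [J, mem_erase, mem_filter, mem_powerset] at hI
      exact Finset.sdiff_ssubset hI.2.1 (Finset.nonempty_iff_ne_empty.2 hI.1)
    have hsplit : ∀ f : Finset W → ℚ, ∑ I ∈ S.powerset with indep adj I, f I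
        = f ∅ + ∑ I ∈ J, f I := by
      intro f
      rw [Finset.add_sum_erase]
      simp [indep]
    obtain ⟨q, hq0, hq⟩ := exists_antidiff (∑ I ∈ J, Q (S \ I)) (PS adj 0 S).ncard
    refine ⟨q, fun n => ⟨?_, ?_⟩⟩
    · induction n with
      | zero => simpa using hq0
      | succ n ihn =>
        push_cast
        rw [hq, ihn, PS_rec adj hs n S]
        push_cast
        rw [hsplit, Polynomial.eval_finsetSum, Finset.sdiff_empty]
        congr 1
        exact Finset.sum_congr rfl fun I hI => ((hQ _ (hJ I hI)) n).1
    · induction n with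
      | zero => simpa using hq0.trans (zero_case adj S)
      | succ n ihn =>
        have h := hq (-((n + 1 : ℕ) : ℚ))
        have e : -((n + 1 : ℕ) : ℚ) + 1 = -(n : ℚ) := by push_cast; ring
        rw [e, ihn] at h
        have hr := congrArg (Int.cast : ℤ → ℚ) (QS_rec adj hs n S)
        push_cast at hr
        rw [hsplit] at hr
        rw [Polynomial.eval_finsetSum] at h
        rw [hr] at h
        have e3 : ∑ I ∈ J, Polynomial.eval (-((n + 1 : ℕ) : ℚ)) (Q (S \ I)) =
            (-1) ^ S.card * ∑ I ∈ J, (-1) ^ I.card * ((QS adj (n + 1) (S \ I)).ncard : ℚ) := by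
          rw [Finset.mul_sum]
          refine Finset.sum_congr rfl fun I hI => ?_
          rw [((hQ _ (hJ I hI)) (n + 1)).2, ← mul_assoc]
          congr 1
          simp only [J, mem_erase, mem_filter, mem_powerset] at hI
          have := Finset.card_sdiff_add_card_eq_card hI.2.1
          rw [← this, pow_add, mul_assoc, ← mul_pow]; simp
        rw [e3] at h
        simp only [Finset.card_empty, pow_zero, one_mul, Finset.sdiff_empty] at h
        linarith
end Recip

namespace Recip
open Finset

section quot
set_option linter.unusedSectionVars false
variable {V : Type*} [Fintype V] [DecidableEq V]

abbrev Cyc (f : Equiv.Perm V) := Quotient (Equiv.Perm.SameCycle.setoid f)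

theorem mk_eq (f : Equiv.Perm V) (u v : V) :
    (Quotient.mk (Equiv.Perm.SameCycle.setoid f) u = Quotient.mk _ v) ↔ f.SameCycle u v :=
  Quotient.eq

open Classical in
theorem sign_eq_cyc (f : Equiv.Perm V) :
    ((Equiv.Perm.sign f : ℤˣ) : ℤ) = (-1) ^ Fintype.card V * (-1) ^ Fintype.card (Cyc f) := by
  let m : V → Cyc f := Quotient.mk _
  have hm : ∀ u v, m u = m v ↔ f.SameCycle u v := fun u v => mk_eq f u v
  have e0 : (univ : Finset (Cyc f)) = f.support.image m ∪ f.supportᶜ.image m := by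
    rw [← Finset.image_union, Finset.union_compl]
    ext x
    simp only [mem_univ, mem_image, true_and, true_iff]
    exact Quotient.exists_rep x
  have hd : Disjoint (f.support.image m) (f.supportᶜ.image m) := by
    rw [Finset.disjoint_left]
    intro x hx hy
    simp only [mem_image, mem_compl] at hx hy
    obtain ⟨u, hu, rfl⟩ := hx
    obtain ⟨v, hv, h⟩ := hy
    exact hv (((hm v u).1 h).mem_support_iff.2 hu)
  have e1 : (f.supportᶜ.image m).card = f.supportᶜ.card := by
    apply Finset.card_image_of_injOn
    intro u hu v hv h
    have hu' : f u = u := by simpa using hu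
    have := (hm u v).1 h
    obtain ⟨i, hi⟩ := this
    rw [← hi]
    exact (Equiv.Perm.zpow_apply_eq_self_of_apply_eq_self hu' i).symm
  have e2 : (f.support.image m).card = f.cycleFactorsFinset.card := by
    refine Finset.card_bij (fun x _ => Quotient.lift (fun v => f.cycleOf v)
      (fun a b (h : f.SameCycle a b) => h.cycleOf_eq) x) ?_ ?_ ?_
    · intro x hx
      simp only [mem_image] at hx
      obtain ⟨u, hu, rfl⟩ := hx
      exact Equiv.Perm.cycleOf_mem_cycleFactorsFinset_iff.2 hu
    · intro x hx y hy h
      simp only [mem_image] at hx hy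
      obtain ⟨u, hu, rfl⟩ := hx
      obtain ⟨v, hv, rfl⟩ := hy
      exact (hm u v).2 ((Equiv.Perm.sameCycle_iff_cycleOf_eq_of_mem_support hu hv).2 h)
    · intro c hc
      have hc' := (Equiv.Perm.mem_cycleFactorsFinset_iff.1 hc).1
      obtain ⟨a, ha, _⟩ := hc'
      have ha' : a ∈ c.support := by simpa using ha
      refine ⟨m a, ?_, ?_⟩
      · exact Finset.mem_image_of_mem _ (Equiv.Perm.mem_cycleFactorsFinset_support_le hc ha')
      · exact (Equiv.Perm.cycle_is_cycleOf ha' hc).symm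
  have e3 : Fintype.card (Cyc f) = f.cycleFactorsFinset.card + f.supportᶜ.card := by
    rw [← Finset.card_univ, e0, Finset.card_union_of_disjoint hd, e1, e2]
  have e4 : Fintype.card V = f.support.card + f.supportᶜ.card :=
    (Finset.card_add_card_compl _).symm
  have e5 : f.cycleType.card = f.cycleFactorsFinset.card := by
    rw [Equiv.Perm.cycleType_def]; simp
  rw [Equiv.Perm.sign_of_cycleType, Equiv.Perm.sum_cycleType, e5, e3, e4]
  push_cast
  have : ((-1 : ℤ) ^ f.supportᶜ.card) * ((-1 : ℤ) ^ f.supportᶜ.card) = 1 := by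
    rw [← mul_pow]; simp
  rw [pow_add, pow_add, pow_add]
  linear_combination (-(-1) ^ f.support.card * (-1) ^ f.cycleFactorsFinset.card) * this

theorem inv_of {α : Type*} (f : Equiv.Perm V) (c : V → α) (hc : ∀ v, c (f v) = c v) (u v : V)
    (h : f.SameCycle u v) : c u = c v := by
  obtain ⟨i, _, _, rfl⟩ := Equiv.Perm.SameCycle.exists_pow_eq f h
  clear h
  clear * - hc
  induction i with
  | zero => simp
  | succ n ih => rw [pow_succ', Equiv.Perm.mul_apply, hc]; exact ih

def qadj (f : Equiv.Perm V) (A : V → V → Prop) (a b : Cyc f) : Prop :=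
  ∃ u v, Quotient.mk _ u = a ∧ Quotient.mk _ v = b ∧ A u v

theorem card_fixed_col (f : Equiv.Perm V) (A : V → V → Prop) [Fintype (Cyc f)] (n : ℕ) :
    Nat.card {c : V → Fin n // (∀ u v, A u v → c u ≠ c v) ∧ ∀ v, c (f v) = c v} =
      (PS (qadj f A) n univ).ncard := by
  rw [← Nat.card_coe_set_eq]
  refine Nat.card_congr
    { toFun := fun c => ⟨Quotient.lift (fun v => (c.1 v : ℕ) + 1) (fun a b h => by
        rw [inv_of f c.1 c.2.2 a b h]), ?_, ?_, ?_⟩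
      invFun := fun c => ⟨fun v => ⟨c.1 (Quotient.mk _ v) - 1, ?_⟩, ?_, ?_⟩
      left_inv := ?_
      right_inv := ?_ }
  · intro v
    induction v using Quotient.inductionOn with | h v => simp
  · intro v
    induction v using Quotient.inductionOn with | h v =>
    have := (c.1 v).2
    simp only [Quotient.lift_mk]; omega
  · rintro _ _ _ _ ⟨u, v, rfl, rfl, h⟩ h'
    simp only [Quotient.lift_mk] at h'
    exact c.2.1 u v h (Fin.ext (by omega))
  · have h1 := (c.2.1 (Quotient.mk _ v)).2 (mem_univ _)
    have h2 := c.2.2.1 (Quotient.mk _ v)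
    omega
  · intro u v h h'
    have h1 := (c.2.1 (Quotient.mk _ v)).2 (mem_univ _)
    have h2 := (c.2.1 (Quotient.mk _ u)).2 (mem_univ _)
    simp only [Fin.mk.injEq] at h'
    exact c.2.2.2 (Quotient.mk _ u) (Quotient.mk _ v) (mem_univ _) (mem_univ _)
      ⟨u, v, rfl, rfl, h⟩ (by omega)
  · intro v
    have : (Quotient.mk (Equiv.Perm.SameCycle.setoid f) (f v)) = Quotient.mk _ v :=
      (mk_eq f _ _).2 (Equiv.Perm.sameCycle_apply_left.2 (Equiv.Perm.SameCycle.refl _ _))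
    simp only [this]
  · intro c
    ext v
    simp
  · intro c
    ext v
    have h1 := (c.2.1 v).2 (mem_univ _)
    induction v using Quotient.inductionOn with | h v =>
    simp only [Quotient.lift_mk]; omega

/-- weakly compatible pairs in relational form -/
def IsP (A : V → V → Prop) {n : ℕ} (x : (V → Fin n) × (V → V → Prop)) : Prop :=
  (∀ u v, x.2 u v → A u v) ∧ (∀ u v, A u v → x.2 u v ∨ x.2 v u) ∧
    (∀ u v, x.2 u v → x.1 u ≤ x.1 v) ∧ ∀ v, ¬ Relation.TransGen x.2 v v

theorem trans_pow (f : Equiv.Perm V) (r : V → V → Prop) (hr : ∀ u v, r (f u) (f v) ↔ r u v)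
    (k : ℕ) (u v : V) (h : Relation.TransGen r u v) :
    Relation.TransGen r ((f ^ k) u) ((f ^ k) v) := by
  induction k with
  | zero => simpa using h
  | succ k ih =>
    rw [pow_succ', Equiv.Perm.mul_apply, Equiv.Perm.mul_apply]
    exact Relation.TransGen.lift f (fun a b h => (hr a b).2 h) _ _ ih

theorem no_trans_same (f : Equiv.Perm V) (r : V → V → Prop) (hr : ∀ u v, r (f u) (f v) ↔ r u v)
    (ha : ∀ v, ¬ Relation.TransGen r v v) (u v : V) (h : f.SameCycle u v) :
    ¬ Relation.TransGen r u v := by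
  intro ht
  obtain ⟨i, _, _, rfl⟩ := Equiv.Perm.SameCycle.exists_pow_eq f h
  have key : ∀ k : ℕ, Relation.TransGen r u (((f ^ i) ^ (k + 1)) u) := by
    intro k
    induction k with
    | zero => simpa using ht
    | succ k ih =>
      refine ht.trans ?_
      rw [pow_succ' (f ^ i) (k + 1), Equiv.Perm.mul_apply]
      exact trans_pow f r hr i _ _ ih
  have := key (orderOf (f ^ i) - 1)
  rw [Nat.sub_add_cancel (orderOf_pos _), pow_orderOf_eq_one] at this
  exact ha u this

/-- quotient relation -/
def qrel (f : Equiv.Perm V) (r : V → V → Prop) (a b : Cyc f) : Prop :=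
  ∃ u v, Quotient.mk _ u = a ∧ Quotient.mk _ v = b ∧ r u v

theorem qrel_trans (f : Equiv.Perm V) (r : V → V → Prop) (hr : ∀ u v, r (f u) (f v) ↔ r u v)
    (a b : Cyc f) (h : Relation.TransGen (qrel f r) a b) :
    ∀ u, Quotient.mk _ u = a → ∃ v, Quotient.mk _ v = b ∧ Relation.TransGen r u v := by
  have step : ∀ a b, qrel f r a b → ∀ u, Quotient.mk _ u = a →
      ∃ v, Quotient.mk _ v = b ∧ Relation.TransGen r u v := by
    rintro _ _ ⟨u', v', rfl, rfl, h⟩ u hu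
    have := ((mk_eq f _ _).1 hu).symm
    obtain ⟨i, _, _, rfl⟩ := Equiv.Perm.SameCycle.exists_pow_eq f this
    refine ⟨(f ^ i) v', ?_, trans_pow f r hr i _ _ (.single h)⟩
    exact (mk_eq f _ _).2 (Equiv.Perm.sameCycle_pow_left.2 (Equiv.Perm.SameCycle.refl _ _))
  induction h with
  | single h => exact step _ _ h
  | tail _ h ih =>
    intro u hu
    obtain ⟨v, hv, huv⟩ := ih u hu
    obtain ⟨w, hw, hvw⟩ := step _ _ h v hv
    exact ⟨w, hw, huv.trans hvw⟩

theorem qrel_acyclic (f : Equiv.Perm V) (r : V → V → Prop) (hr : ∀ u v, r (f u) (f v) ↔ r u v)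
    (ha : ∀ v, ¬ Relation.TransGen r v v) (a : Cyc f) :
    ¬ Relation.TransGen (qrel f r) a a := by
  intro h
  obtain ⟨u, rfl⟩ := Quotient.exists_rep a
  obtain ⟨v, hv, huv⟩ := qrel_trans f r hr _ _ h u rfl
  exact no_trans_same f r hr ha u v ((mk_eq f _ _).1 hv).symm huv

theorem card_fixed_pair (f : Equiv.Perm V) (A : V → V → Prop) (hs : ∀ u v, A u v → A v u)
    (hA : ∀ u v, A u v ↔ A (f u) (f v)) [Fintype (Cyc f)] (n : ℕ) :
    Nat.card {x : (V → Fin n) × (V → V → Prop) // IsP A x ∧ (∀ v, x.1 (f v) = x.1 v) ∧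
      ∀ u v, x.2 (f u) (f v) ↔ x.2 u v} =
      (QS (qadj f A) n univ).ncard := by
  rw [← Nat.card_coe_set_eq]
  have hf : ∀ v, (Quotient.mk (Equiv.Perm.SameCycle.setoid f) (f v)) = Quotient.mk _ v :=
    fun v => (mk_eq f _ _).2 (Equiv.Perm.sameCycle_apply_left.2 (Equiv.Perm.SameCycle.refl _ _))
  refine Nat.card_congr
    { toFun := fun x => ⟨(Quotient.lift (fun v => (x.1.1 v : ℕ) + 1) (fun a b h => by
        rw [inv_of f x.1.1 x.2.2.1 a b h]), qrel f x.1.2), ?_, ?_, ?_, ?_, ?_⟩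
      invFun := fun x => ⟨(fun v => ⟨x.1.1 (Quotient.mk _ v) - 1, ?_⟩,
        fun u v => A u v ∧ x.1.2 (Quotient.mk _ u) (Quotient.mk _ v)), ⟨?_, ?_, ?_, ?_⟩, ?_, ?_⟩
      left_inv := ?_
      right_inv := ?_ }
  · intro v
    induction v using Quotient.inductionOn with | h v => simp
  · intro v
    induction v using Quotient.inductionOn with | h v =>
    have := (x.1.1 v).2
    simp only [Quotient.lift_mk]; omega
  · rintro _ _ ⟨u, v, rfl, rfl, h⟩
    refine ⟨mem_univ _, mem_univ _, ⟨u, v, rfl, rfl, x.2.1.1 u v h⟩, ?_⟩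
    have := x.2.1.2.2.1 u v h
    simp only [Quotient.lift_mk]
    have : (x.1.1 u : ℕ) ≤ x.1.1 v := this
    omega
  · rintro _ _ _ _ ⟨u, v, rfl, rfl, h⟩
    rcases x.2.1.2.1 u v h with h | h
    · exact Or.inl ⟨u, v, rfl, rfl, h⟩
    · exact Or.inr ⟨v, u, rfl, rfl, h⟩
  · exact qrel_acyclic f x.1.2 x.2.2.2 x.2.1.2.2.2
  · have h1 := (x.2.1 (Quotient.mk _ v)).2 (mem_univ _)
    have h2 := x.2.2.1 (Quotient.mk _ v)
    omega
  · exact fun u v h => h.1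
  · intro u v h
    by_cases h' : x.1.2 (Quotient.mk _ u) (Quotient.mk _ v)
    · exact Or.inl ⟨h, h'⟩
    · have h2 : x.1.2 (Quotient.mk _ v) (Quotient.mk _ u) :=
        (x.2.2.2.2.1 _ _ (mem_univ _) (mem_univ _) ⟨u, v, rfl, rfl, h⟩).resolve_left h'
      exact Or.inr ⟨hs _ _ h, h2⟩
  · intro u v h
    have := (x.2.2.2.1 _ _ h.2).2.2.2
    simp only [Fin.mk_le_mk]; omega
  · intro v hv
    exact x.2.2.2.2.2 (Quotient.mk _ v) (Relation.TransGen.lift _ (fun a b h => h.2) _ _ hv)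
  · intro v
    simp only [hf]
  · intro u v
    simp only [hf, ← hA]
  · rintro ⟨⟨c, r⟩, ⟨h1, h2, h3, h4⟩, h5, h6⟩
    dsimp only at h1 h2 h3 h4 h5 h6
    apply Subtype.ext
    apply Prod.ext
    · funext v
      simp
    · funext u v
      apply propext
      dsimp only
      constructor
      · rintro ⟨h, h'⟩
        rcases h2 u v h with h'' | h''
        · exact h''
        · exact absurd (.tail (.single h') ⟨v, u, rfl, rfl, h''⟩) (qrel_acyclic f r h6 h4 _)
      · exact fun h => ⟨h1 u v h, u, v, rfl, rfl, h⟩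
  · intro x
    apply Subtype.ext
    apply Prod.ext
    · funext v
      have h1 := (x.2.1 v).2 (mem_univ _)
      induction v using Quotient.inductionOn with | h v =>
      simp only [Quotient.lift_mk]; omega
    · funext a b
      apply propext
      dsimp only
      constructor
      · rintro ⟨u, v, rfl, rfl, h⟩
        exact h.2
      · intro h
        obtain ⟨u, v, rfl, rfl, h'⟩ := (x.2.2.2.1 _ _ h).2.2.1
        exact ⟨u, v, rfl, rfl, h', h⟩

theorem perm_recip (f : Equiv.Perm V) (A : V → V → Prop) (hs : ∀ u v, A u v → A v u)
    (hA : ∀ u v, A u v ↔ A (f u) (f v)) :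
    ∃ q : Polynomial ℚ, ∀ n : ℕ, q.eval (n : ℚ) =
        Nat.card {c : V → Fin n // (∀ u v, A u v → c u ≠ c v) ∧ ∀ v, c (f v) = c v} ∧
      q.eval (-(n : ℚ)) = (-1) ^ Fintype.card V * (((Equiv.Perm.sign f : ℤˣ) : ℤ) : ℚ) *
        Nat.card {x : (V → Fin n) × (V → V → Prop) // IsP A x ∧ (∀ v, x.1 (f v) = x.1 v) ∧
          ∀ u v, x.2 (f u) (f v) ↔ x.2 u v} := by
  classical
  have hsq : ∀ a b, qadj f A a b → qadj f A b a := by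
    rintro _ _ ⟨u, v, rfl, rfl, h⟩
    exact ⟨v, u, rfl, rfl, hs _ _ h⟩
  obtain ⟨q, hq⟩ := recip (qadj f A) hsq univ
  refine ⟨q, fun n => ⟨?_, ?_⟩⟩
  · rw [(hq n).1, card_fixed_col]
  · rw [(hq n).2, card_fixed_pair f A hs hA, sign_eq_cyc, Finset.card_univ]
    push_cast
    have : ((-1 : ℚ) ^ Fintype.card V) * ((-1 : ℚ) ^ Fintype.card V) = 1 := by
      rw [← mul_pow]; simp
    rw [← mul_assoc, this, one_mul]
end quot

theorem signed_burnside {G X : Type*} [Group G] [Fintype G] [MulAction G X] [Finite X]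
    (S : Set X) (hS : ∀ (g : G) x, x ∈ S → g • x ∈ S) (χ : G →* ℤˣ) :
    ∑ g : G, ((χ g : ℤˣ) : ℤ) * (Nat.card {x : X // x ∈ S ∧ g • x = x} : ℤ) =
      (Nat.card G : ℤ) * Nat.card (Quot (fun x y : {x : X // x ∈ S ∧ ∀ g : G, g • x = x → χ g = 1} =>
        ∃ g : G, y.1 = g • x.1)) := by
  classical
  have : Fintype X := Fintype.ofFinite X
  let Y := {x : X // x ∈ S ∧ ∀ g : G, g • x = x → χ g = 1}
  let act : MulAction G Y :=
    { smul := fun g y => ⟨g • y.1, hS g _ y.2.1, fun h hh => by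
        have h1 : (g⁻¹ * h * g) • y.1 = y.1 := by
          rw [mul_smul, mul_smul, hh, inv_smul_smul]
        have := y.2.2 _ h1
        rw [map_mul, map_mul, map_inv, mul_right_comm, inv_mul_cancel, one_mul] at this
        exact this⟩
      one_smul := fun y => Subtype.ext (one_smul G y.1)
      mul_smul := fun g h y => Subtype.ext (mul_smul g h y.1) }
  have hval : ∀ (g : G) (y : Y), (g • y).1 = g • y.1 := fun _ _ => rfl
  have hq : Nat.card (Quot (fun x y : Y => ∃ g : G, y.1 = g • x.1)) =
      Fintype.card (Quotient (MulAction.orbitRel G Y)) := by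
    rw [← Nat.card_eq_fintype_card]
    refine Nat.card_congr (Quot.congrRight fun x y => ?_)
    rw [MulAction.orbitRel_apply, MulAction.mem_orbit_symm, MulAction.mem_orbit_iff]
    exact exists_congr fun g => ⟨fun h => Subtype.ext (by rw [hval, h]), fun h => by rw [← h, hval]⟩
  have hb := MulAction.sum_card_fixedBy_eq_card_orbits_mul_card_group G Y
  rw [hq, Nat.card_eq_fintype_card, mul_comm, ← Nat.cast_mul, ← hb]
  push_cast
  have e1 : ∀ g : G, (Nat.card {x : X // x ∈ S ∧ g • x = x} : ℤ) =
      ∑ x : X, if x ∈ S ∧ g • x = x then 1 else 0 := by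
    intro g
    rw [Nat.card_eq_fintype_card, Fintype.card_subtype]; simp
  have e2 : ∀ g : G, (Fintype.card (MulAction.fixedBy Y g) : ℤ) =
      ∑ x : X, if (x ∈ S ∧ ∀ g : G, g • x = x → χ g = 1) ∧ g • x = x then 1 else 0 := by
    intro g
    have : Fintype.card (MulAction.fixedBy Y g) =
        Fintype.card {x : X // (x ∈ S ∧ ∀ g : G, g • x = x → χ g = 1) ∧ g • x = x} := by
      refine Fintype.card_congr
        { toFun := fun y => ⟨y.1.1, y.1.2, congrArg Subtype.val y.2⟩
          invFun := fun y => ⟨⟨y.1, y.2.1⟩, Subtype.ext y.2.2⟩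
          left_inv := fun _ => rfl
          right_inv := fun _ => rfl }
    rw [this, Fintype.card_subtype]; simp
  simp only [e1, e2, Finset.mul_sum]
  rw [Finset.sum_comm, Finset.sum_comm (s := univ (α := G))]
  refine Finset.sum_congr rfl fun x _ => ?_
  by_cases hx : x ∈ S
  swap
  · simp [hx]
  by_cases he : ∀ g : G, g • x = x → χ g = 1
  · refine Finset.sum_congr rfl fun g _ => ?_
    by_cases hg : g • x = x
    · rw [if_pos ⟨hx, hg⟩, if_pos ⟨⟨hx, he⟩, hg⟩, he g hg]; simp
    · simp [hg]
  · rw [Finset.sum_eq_zero (f := fun g : G => if (x ∈ S ∧ _) ∧ _ then (1 : ℤ) else 0)]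
    · push Not at he
      obtain ⟨h, hh, hχ⟩ := he
      have hχ' : χ h = -1 := (Int.units_eq_one_or _).resolve_left hχ
      set T := ∑ g : G, ((χ g : ℤˣ) : ℤ) * (if x ∈ S ∧ g • x = x then 1 else 0) with hT
      have : T = -T := by
        conv_lhs => rw [hT, ← Equiv.sum_comp (Equiv.mulRight h)]
        rw [hT, ← Finset.sum_neg_distrib]
        refine Finset.sum_congr rfl fun g _ => ?_
        simp only [Equiv.coe_mulRight, map_mul, hχ', mul_smul, hh]
        split_ifs <;> simp
      omega
    · intro g _
      rw [if_neg]
      exact fun h => he h.1.2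
end Recip

namespace Recip
section ori
variable {V : Type*} (Γ : SimpleGraph V)

theorem dirAdj_adj {σ : GraphOri Γ} {u v : V} (h : dirAdj Γ σ u v) : Γ.Adj u v := h.1

theorem head_swap (σ : GraphOri Γ) {u v : V} (h : Γ.Adj u v) :
    σ.1 ⟨s(u, v), Γ.mem_edgeSet.mpr h⟩ = σ.1 ⟨s(v, u), Γ.mem_edgeSet.mpr h.symm⟩ := by
  have e : (⟨s(u, v), Γ.mem_edgeSet.mpr h⟩ : Γ.edgeSet) =
    ⟨s(v, u), Γ.mem_edgeSet.mpr h.symm⟩ := Subtype.ext Sym2.eq_swap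
  exact congrArg σ.1 e

theorem dirAdj_total (σ : GraphOri Γ) {u v : V} (h : Γ.Adj u v) :
    dirAdj Γ σ u v ∨ dirAdj Γ σ v u := by
  have := σ.2 ⟨s(u, v), Γ.mem_edgeSet.mpr h⟩
  rcases Sym2.mem_iff.1 this with h' | h'
  · refine Or.inr ⟨h.symm, ?_⟩
    exact (head_swap Γ σ h).symm.trans h'
  · exact Or.inl ⟨h, h'⟩

theorem dirAdj_asymm (σ : GraphOri Γ) {u v : V} (h : dirAdj Γ σ u v) (h' : dirAdj Γ σ v u) :
    False := by
  obtain ⟨h1, h2⟩ := h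
  obtain ⟨h3, h4⟩ := h'
  apply h1.ne
  exact h4.symm.trans ((head_swap Γ σ h1).symm.trans h2)

theorem head_iff (σ : GraphOri Γ) {u v : V} (h : Γ.Adj u v) :
    σ.1 ⟨s(u, v), Γ.mem_edgeSet.mpr h⟩ = v ↔ dirAdj Γ σ u v :=
  ⟨fun h' => ⟨h, h'⟩, fun h' => h'.2⟩

theorem dirAdj_inj {σ σ' : GraphOri Γ} (h : ∀ u v, dirAdj Γ σ u v ↔ dirAdj Γ σ' u v) :
    σ = σ' := by
  apply Subtype.ext
  funext ⟨e, he⟩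
  induction e using Sym2.ind with
  | _ u v =>
  have hadj : Γ.Adj u v := he
  rcases dirAdj_total Γ σ hadj with h1 | h1
  · exact h1.2.trans ((h _ _).1 h1).2.symm
  · have h2 := h1.2.trans ((h _ _).1 h1).2.symm
    have e : (⟨s(v, u), Γ.mem_edgeSet.mpr h1.1⟩ : Γ.edgeSet) = ⟨s(u, v), he⟩ :=
      Subtype.ext Sym2.eq_swap
    rw [e] at h2
    exact h2

theorem exists_ori (r : V → V → Prop) (h1 : ∀ u v, r u v → Γ.Adj u v)
    (h2 : ∀ u v, Γ.Adj u v → r u v ∨ r v u) (h3 : ∀ u v, r u v → ¬ r v u) :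
    ∃ σ : GraphOri Γ, dirAdj Γ σ = r := by
  have : ∀ e : Γ.edgeSet, ∃ v : V, ∃ u : V, (e : Sym2 V) = s(u, v) ∧ r u v := by
    rintro ⟨e, he⟩
    induction e using Sym2.ind with
    | _ u v =>
    rcases h2 u v he with h | h
    · exact ⟨v, u, rfl, h⟩
    · exact ⟨u, v, Sym2.eq_swap, h⟩
  choose F hF using this
  refine ⟨⟨F, fun e => ?_⟩, ?_⟩
  · obtain ⟨u, hu, _⟩ := hF e
    rw [hu]; simp
  · funext u v
    apply propext
    constructor
    · rintro ⟨h, h'⟩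
      obtain ⟨w, hw, hr⟩ := hF ⟨s(u, v), Γ.mem_edgeSet.mpr h⟩
      dsimp only at h' hw
      rw [h'] at hw hr
      rw [Sym2.eq_iff] at hw
      rcases hw with ⟨rfl, _⟩ | ⟨h5, h6⟩
      · exact hr
      · exact absurd h5 h.ne
    · intro h
      refine ⟨h1 u v h, ?_⟩
      obtain ⟨w, hw, hr⟩ := hF ⟨s(u, v), Γ.mem_edgeSet.mpr (h1 u v h)⟩
      dsimp only at hw ⊢
      generalize F _ = z at *
      rw [Sym2.eq_iff] at hw
      rcases hw with ⟨rfl, rfl⟩ | ⟨rfl, rfl⟩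
      · rfl
      · exact absurd hr (h3 _ _ h)

theorem oriSMulEq_iff {G : Type*} [Group G] [MulAction G V]
    (hact : ∀ (g : G) (u v : V), Γ.Adj u v → Γ.Adj (g • u) (g • v)) (g : G) (σ σ' : GraphOri Γ) :
    oriSMulEq Γ hact g σ σ' ↔ ∀ u v, dirAdj Γ σ' u v ↔ dirAdj Γ σ (g⁻¹ • u) (g⁻¹ • v) := by
  constructor
  · intro h u v
    constructor
    · rintro ⟨h1, h2⟩
      refine ⟨hact _ _ _ h1, ?_⟩
      rw [h u v h1] at h2
      rw [eq_inv_smul_iff]; exact h2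
    · rintro ⟨h1, h2⟩
      have h3 : Γ.Adj u v := by simpa using hact g _ _ h1
      refine ⟨h3, ?_⟩
      rw [h u v h3, h2, smul_inv_smul]
  · intro h u v huv
    have key : ∀ a b, dirAdj Γ σ' a b → ∀ (hab : Γ.Adj a b),
        σ'.1 ⟨s(a, b), Γ.mem_edgeSet.mpr hab⟩ =
        g • σ.1 ⟨s(g⁻¹ • a, g⁻¹ • b), Γ.mem_edgeSet.mpr (hact g⁻¹ a b hab)⟩ := by
      intro a b h1 hab
      rw [h1.2, ((h a b).1 h1).2, smul_inv_smul]
    rcases dirAdj_total Γ σ' huv with h1 | h1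
    · exact key u v h1 huv
    · have := key v u h1 huv.symm
      have e : (⟨s(v, u), Γ.mem_edgeSet.mpr huv.symm⟩ : Γ.edgeSet) =
        ⟨s(u, v), Γ.mem_edgeSet.mpr huv⟩ := Subtype.ext Sym2.eq_swap
      have e' : (⟨s(g⁻¹ • v, g⁻¹ • u), Γ.mem_edgeSet.mpr (hact g⁻¹ v u huv.symm)⟩ : Γ.edgeSet) =
        ⟨s(g⁻¹ • u, g⁻¹ • v), Γ.mem_edgeSet.mpr (hact g⁻¹ u v huv)⟩ := Subtype.ext Sym2.eq_swap
      rw [e, e'] at this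
      exact this

theorem isP_iff {n : ℕ} (c : V → Fin n) (σ : GraphOri Γ) :
    IsP Γ.Adj (c, dirAdj Γ σ) ↔ oriAcyclic Γ σ ∧ weakCompat Γ c σ := by
  constructor
  · rintro ⟨h1, h2, h3, h4⟩
    refine ⟨h4, fun u v h hc => ?_⟩
    refine (head_iff Γ σ h).2 ?_
    rcases dirAdj_total Γ σ h with h | h
    · exact h
    · exact absurd (h3 _ _ h) (not_le.2 hc)
  · rintro ⟨h1, h2⟩
    refine ⟨fun u v h => h.1, fun u v h => dirAdj_total Γ σ h, fun u v h => ?_, h1⟩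
    by_contra hc
    have h3 := h2 v u h.1.symm (not_le.1 hc)
    exact dirAdj_asymm Γ σ h ⟨h.1.symm, h3⟩

end ori

/-- action on colorings -/
abbrev colAct (G V C : Type*) [Group G] [MulAction G V] : MulAction G (V → C) where
  smul g c := fun v => c (g⁻¹ • v)
  one_smul c := by
    funext v
    change c ((1 : G)⁻¹ • v) = c v
    simp
  mul_smul g h c := by
    funext v
    change c ((g * h)⁻¹ • v) = c (h⁻¹ • g⁻¹ • v)
    rw [mul_inv_rev, mul_smul]

/-- action on pairs -/
abbrev pairAct (G V C : Type*) [Group G] [MulAction G V] :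
    MulAction G ((V → C) × (V → V → Prop)) where
  smul g x := (fun v => x.1 (g⁻¹ • v), fun u v => x.2 (g⁻¹ • u) (g⁻¹ • v))
  one_smul x := by
    change ((fun v => x.1 ((1 : G)⁻¹ • v), fun u v => x.2 ((1 : G)⁻¹ • u) ((1 : G)⁻¹ • v)) :
      (V → C) × (V → V → Prop)) = x
    simp
  mul_smul g h x := by
    change ((fun v => x.1 ((g * h)⁻¹ • v), fun u v => x.2 ((g * h)⁻¹ • u) ((g * h)⁻¹ • v)) :
      (V → C) × (V → V → Prop)) =
      (fun v => x.1 (h⁻¹ • g⁻¹ • v), fun u v => x.2 (h⁻¹ • g⁻¹ • u) (h⁻¹ • g⁻¹ • v))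
    simp only [mul_inv_rev, mul_smul]

section main
variable {V G : Type*} [Fintype V] [DecidableEq V] [Group G] [Fintype G]
    [MulAction G V] (Γ : SimpleGraph V)

set_option linter.unusedSectionVars false

theorem col_burnside
    (hact : ∀ (g : G) (u v : V), Γ.Adj u v → Γ.Adj (g • u) (g • v)) (n : ℕ) :
    ∑ g : G, (Nat.card {c : V → Fin n // (∀ u v, Γ.Adj u v → c u ≠ c v) ∧
        ∀ v, c ((MulAction.toPerm g⁻¹ : Equiv.Perm V) v) = c v} : ℤ) =
      (Nat.card G : ℤ) *
        Nat.card (Quot (fun c c' : {c : V → Fin n // ∀ u v : V, Γ.Adj u v → c u ≠ c v} =>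
          ∃ g : G, ∀ x : V, c'.1 x = c.1 (g⁻¹ • x))) := by
  let _ := colAct G V (Fin n)
  have h := signed_burnside (G := G) (X := V → Fin n)
    {c | ∀ u v : V, Γ.Adj u v → c u ≠ c v} (fun g c hc u v h => hc _ _ (hact g⁻¹ _ _ h)) 1
  have e : Nat.card (Quot (fun x y : {x : V → Fin n // x ∈ {c : V → Fin n | ∀ u v : V, Γ.Adj u v → c u ≠ c v} ∧
        ∀ g : G, g • x = x → (1 : G →* ℤˣ) g = 1} => ∃ g : G, y.1 = g • x.1)) =
      Nat.card (Quot (fun c c' : {c : V → Fin n // ∀ u v : V, Γ.Adj u v → c u ≠ c v} =>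
          ∃ g : G, ∀ x : V, c'.1 x = c.1 (g⁻¹ • x))) := by
    refine Nat.card_congr (Quot.congr
      (Equiv.subtypeEquivRight fun c => ⟨fun h => h.1, fun h => ⟨h, fun _ _ => rfl⟩⟩) ?_)
    intro x y
    exact exists_congr fun g => funext_iff
  rw [e] at h
  rw [← h]
  refine Finset.sum_congr rfl fun g _ => ?_
  simp only [MonoidHom.one_apply, Units.val_one, one_mul, Nat.cast_inj]
  refine Nat.card_congr (Equiv.subtypeEquivRight fun c => and_congr Iff.rfl ?_)
  exact funext_iff.symm

theorem pair_burnside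
    (hact : ∀ (g : G) (u v : V), Γ.Adj u v → Γ.Adj (g • u) (g • v)) (n : ℕ) :
    ∑ g : G, ((Equiv.Perm.sign (MulAction.toPerm g : Equiv.Perm V) : ℤˣ) : ℤ) *
      (Nat.card {x : (V → Fin n) × (V → V → Prop) // IsP Γ.Adj x ∧
        (∀ v, x.1 ((MulAction.toPerm g⁻¹ : Equiv.Perm V) v) = x.1 v) ∧
        ∀ u v, x.2 ((MulAction.toPerm g⁻¹ : Equiv.Perm V) u)
          ((MulAction.toPerm g⁻¹ : Equiv.Perm V) v) ↔ x.2 u v} : ℤ) =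
      (Nat.card G : ℤ) *
      Nat.card (Quot (fun x y : {pr : (V → Fin n) × GraphOri Γ //
          oriAcyclic Γ pr.2 ∧ weakCompat Γ pr.1 pr.2 ∧
          ∀ g : G, ((∀ v : V, pr.1 (g⁻¹ • v) = pr.1 v) ∧ oriSMulEq Γ hact g pr.2 pr.2) →
            Equiv.Perm.sign (MulAction.toPerm g : Equiv.Perm V) = 1} =>
        ∃ g : G, (∀ v : V, y.1.1 v = x.1.1 (g⁻¹ • v)) ∧
          oriSMulEq Γ hact g x.1.2 y.1.2)) := by
  let _ := pairAct G V (Fin n)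
  let χ : G →* ℤˣ := Equiv.Perm.sign.comp (MulAction.toPermHom G V)
  have hsm : ∀ (g : G) (x y : (V → Fin n) × (V → V → Prop)), y = g • x ↔
      (∀ v, y.1 v = x.1 (g⁻¹ • v)) ∧ ∀ u v, y.2 u v ↔ x.2 (g⁻¹ • u) (g⁻¹ • v) := by
    intro g x y
    rw [Prod.ext_iff, funext_iff, funext_iff]
    refine and_congr Iff.rfl (forall_congr' fun u => ?_)
    rw [funext_iff]
    exact forall_congr' fun v => eq_iff_iff
  have hsm' : ∀ (g : G) (x : (V → Fin n) × (V → V → Prop)), g • x = x ↔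
      (∀ v, x.1 (g⁻¹ • v) = x.1 v) ∧ ∀ u v, x.2 (g⁻¹ • u) (g⁻¹ • v) ↔ x.2 u v := by
    intro g x
    rw [eq_comm, hsm]
    exact and_congr (forall_congr' fun v => eq_comm)
      (forall_congr' fun u => forall_congr' fun v => Iff.comm)
  have hS : ∀ (g : G) (x : (V → Fin n) × (V → V → Prop)), x ∈ {x | IsP Γ.Adj x} →
      g • x ∈ {x : (V → Fin n) × (V → V → Prop) | IsP Γ.Adj x} := by
    rintro g x ⟨h1, h2, h3, h4⟩
    refine ⟨fun u v h => ?_, fun u v h => h2 _ _ (hact g⁻¹ _ _ h), fun u v h => h3 _ _ h,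
      fun v hv => ?_⟩
    · simpa using hact g _ _ (h1 _ _ h)
    · exact h4 (g⁻¹ • v) (Relation.TransGen.lift (g⁻¹ • ·) (fun a b h => h) _ _ hv)
  have h := signed_burnside (G := G) (X := (V → Fin n) × (V → V → Prop))
    {x | IsP Γ.Adj x} hS χ
  have h1 : ∀ pr : (V → Fin n) × GraphOri Γ, (oriAcyclic Γ pr.2 ∧ weakCompat Γ pr.1 pr.2 ∧
          ∀ g : G, ((∀ v : V, pr.1 (g⁻¹ • v) = pr.1 v) ∧ oriSMulEq Γ hact g pr.2 pr.2) →
            Equiv.Perm.sign (MulAction.toPerm g : Equiv.Perm V) = 1) ↔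
      ((pr.1, dirAdj Γ pr.2) ∈ {x : (V → Fin n) × (V → V → Prop) | IsP Γ.Adj x} ∧
        ∀ g : G, g • ((pr.1, dirAdj Γ pr.2) : (V → Fin n) × (V → V → Prop)) =
          (pr.1, dirAdj Γ pr.2) → χ g = 1) := by
    intro pr
    rw [← and_assoc, ← isP_iff]
    refine and_congr Iff.rfl (forall_congr' fun g => ?_)
    rw [hsm', oriSMulEq_iff]
    refine imp_congr (and_congr Iff.rfl ?_) Iff.rfl
    exact forall_congr' fun u => forall_congr' fun v => Iff.comm
  have e : Nat.card (Quot (fun x y : {x : (V → Fin n) × (V → V → Prop) //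
        x ∈ {x : (V → Fin n) × (V → V → Prop) | IsP Γ.Adj x} ∧
        ∀ g : G, g • x = x → χ g = 1} => ∃ g : G, y.1 = g • x.1)) =
      Nat.card (Quot (fun x y : {pr : (V → Fin n) × GraphOri Γ //
          oriAcyclic Γ pr.2 ∧ weakCompat Γ pr.1 pr.2 ∧
          ∀ g : G, ((∀ v : V, pr.1 (g⁻¹ • v) = pr.1 v) ∧ oriSMulEq Γ hact g pr.2 pr.2) →
            Equiv.Perm.sign (MulAction.toPerm g : Equiv.Perm V) = 1} =>
        ∃ g : G, (∀ v : V, y.1.1 v = x.1.1 (g⁻¹ • v)) ∧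
          oriSMulEq Γ hact g x.1.2 y.1.2)) := by
    symm
    refine Nat.card_congr (Quot.congr (Equiv.ofBijective
      (fun pr => ⟨(pr.1.1, dirAdj Γ pr.1.2), (h1 pr.1).1 pr.2⟩) ⟨?_, ?_⟩) ?_)
    · rintro ⟨⟨c, σ⟩, hx⟩ ⟨⟨c', σ'⟩, hy⟩ hxy
      simp only [Subtype.mk.injEq, Prod.mk.injEq] at hxy
      obtain ⟨rfl, h⟩ := hxy
      have : σ = σ' := dirAdj_inj Γ (fun u v => by rw [h])
      subst this
      rfl
    · rintro ⟨⟨c, r⟩, hP, he⟩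
      obtain ⟨σ, rfl⟩ := exists_ori Γ r hP.1 hP.2.1
        (fun u v h h' => hP.2.2.2 u (.tail (.single h) h'))
      exact ⟨⟨(c, σ), (h1 (c, σ)).2 ⟨hP, he⟩⟩, rfl⟩
    · intro x y
      refine exists_congr fun g => ?_
      rw [hsm, oriSMulEq_iff]
      exact Iff.rfl
  rw [e] at h
  rw [← h]
  refine Finset.sum_congr rfl fun g _ => ?_
  congr 2
  refine Nat.card_congr (Equiv.subtypeEquivRight fun x => and_congr Iff.rfl ?_)
  rw [hsm']
  exact Iff.rfl

end main
end Recip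

/-- Let `Γ` be a finite simple graph and `G` a finite group acting on
`Γ` by automorphisms, and let `χ_{Γ,G}` be the polynomial with
`χ_{Γ,G}(n) = |Col_n(Γ)/G|` for all integers `n ≥ 1`.  Then for all integers `n ≥ 1`,
`χ_{Γ,G}(-n) = (-1)^{|V|} · |Σ_{n,+}(Γ)/G|`, the number of `G`-orbits of even weakly
compatible pairs of an `n`-coloring and an acyclic orientation, up to sign.
(A pair is even if every `g ∈ G` stabilizing it has sign `+1` as a permutation of `V`;
`G` acts on pairs by `g • (c,σ) = (g • c, g • σ)`.) -/
theorem stmt_15 {V G : Type*} [Fintype V] [DecidableEq V] [Group G] [Fintype G]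
    [MulAction G V] (Γ : SimpleGraph V)
    (hact : ∀ (g : G) (u v : V), Γ.Adj u v → Γ.Adj (g • u) (g • v))
    (p : Polynomial ℚ)
    (hp : ∀ n : ℕ, 1 ≤ n →
      p.eval (n : ℚ) =
        Nat.card (Quot (fun c c' : {c : V → Fin n // ∀ u v : V, Γ.Adj u v → c u ≠ c v} =>
          ∃ g : G, ∀ x : V, c'.1 x = c.1 (g⁻¹ • x))))
    (n : ℕ) (hn : 1 ≤ n) :
    p.eval (-(n : ℚ)) = (-1) ^ (Fintype.card V) *
      Nat.card (Quot (fun x y : {pr : (V → Fin n) × GraphOri Γ //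
          oriAcyclic Γ pr.2 ∧ weakCompat Γ pr.1 pr.2 ∧
          ∀ g : G, ((∀ v : V, pr.1 (g⁻¹ • v) = pr.1 v) ∧ oriSMulEq Γ hact g pr.2 pr.2) →
            Equiv.Perm.sign (MulAction.toPerm g : Equiv.Perm V) = 1} =>
        ∃ g : G, (∀ v : V, y.1.1 v = x.1.1 (g⁻¹ • v)) ∧
          oriSMulEq Γ hact g x.1.2 y.1.2)) := by
  classical
  have hA : ∀ (g : G) (u v : V), Γ.Adj u v ↔ Γ.Adj ((MulAction.toPerm g : Equiv.Perm V) u)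
      ((MulAction.toPerm g : Equiv.Perm V) v) := by
    intro g u v
    refine ⟨hact g u v, fun h => ?_⟩
    simpa using hact g⁻¹ _ _ h
  choose q hq using fun g : G => Recip.perm_recip (MulAction.toPerm g⁻¹ : Equiv.Perm V) Γ.Adj
    (fun u v h => h.symm) (hA g⁻¹)
  have hG : (Nat.card G : ℚ) ≠ 0 := by
    rw [Nat.card_eq_fintype_card]; exact_mod_cast Fintype.card_ne_zero
  have hpoly : Polynomial.C (Nat.card G : ℚ) * p = ∑ g : G, q g := by
    apply Polynomial.eq_of_infinite_eval_eq
    refine Set.Infinite.mono (s := Set.range fun m : ℕ => ((m + 1 : ℕ) : ℚ)) ?_ ?_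
    · rintro _ ⟨m, rfl⟩
      change Polynomial.eval _ _ = Polynomial.eval _ _
      rw [Polynomial.eval_mul, Polynomial.eval_C, hp (m + 1) (by omega),
        Polynomial.eval_finsetSum, Finset.sum_congr rfl fun g _ => (hq g (m + 1)).1]
      have := congrArg (Int.cast : ℤ → ℚ) (Recip.col_burnside Γ hact (m + 1))
      push_cast at this ⊢
      exact this.symm
    · apply Set.infinite_range_of_injective
      intro a b h
      have : a + 1 = b + 1 := by
        dsimp only at h
        exact_mod_cast h
      omega
  have h1 := congrArg (Polynomial.eval (-(n : ℚ))) hpoly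
  rw [Polynomial.eval_mul, Polynomial.eval_C, Polynomial.eval_finsetSum,
    Finset.sum_congr rfl fun g _ => (hq g n).2] at h1
  have h2 := congrArg (Int.cast : ℤ → ℚ) (Recip.pair_burnside Γ hact n)
  push_cast at h2
  apply mul_left_cancel₀ hG
  rw [h1, mul_left_comm, ← h2, Finset.mul_sum]
  refine Finset.sum_congr rfl fun g _ => ?_
  have hs : Equiv.Perm.sign (MulAction.toPerm g⁻¹ : Equiv.Perm V) =
      Equiv.Perm.sign (MulAction.toPerm g : Equiv.Perm V) := by
    have : (MulAction.toPerm g⁻¹ : Equiv.Perm V) = (MulAction.toPerm g : Equiv.Perm V)⁻¹ := by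
      ext v; rfl
    rw [this, Equiv.Perm.sign_inv]
  rw [hs, mul_assoc]
end

section
/- Let Γ be a finite simple graph and let Z_2 = {e,τ} act on Γ by automorphisms with sgn(τ) = -1 as permutation of the vertices. Let χ_{Γ,Z_2} be the polynomial with χ_{Γ,Z_2}(n) = |Col_n(Γ)/Z_2| for all n ≥ 1. Then χ_{Γ,Z_2}(-1) = (-1)^{|V|} · |Σ_+|/2, where Σ_+ is the set of even acyclic orientations of Γ. -/
section
open Polynomial

lemma antidiff (Q : ℚ[X]) : ∃ P : ℚ[X], P.eval 0 = 0 ∧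
    ∀ x : ℚ, P.eval (x + 1) = P.eval x + Q.eval x := by
  suffices h : ∃ P : ℚ[X], ∀ x : ℚ, P.eval (x + 1) = P.eval x + Q.eval x by
    obtain ⟨P, hP⟩ := h
    refine ⟨P - C (P.eval 0), by simp, fun x => ?_⟩
    simp [hP x]; ring
  induction Q using Polynomial.induction_on' with
  | add a b ha hb =>
    obtain ⟨P, hP⟩ := ha
    obtain ⟨P', hP'⟩ := hb
    exact ⟨P + P', fun x => by simp [hP x, hP' x]; ring⟩
  | monomial k a =>
    refine ⟨C (a / (k + 1)) * Polynomial.bernoulli (k + 1), fun x => ?_⟩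
    have := Polynomial.bernoulli_eval_one_add (k + 1) x
    have hk : (k : ℚ) + 1 ≠ 0 := by positivity
    rw [add_comm x 1]
    simp [this]
    field_simp

lemma strict_rec {W : Type*} [Fintype W] [DecidableEq W] (r : W → W → Prop) (n : ℕ)
    (M : Finset W) (hM : ∀ w, w ∈ M ↔ ∀ v, ¬ r v w) :
    Nat.card {c : W → Fin (n + 1) // ∀ u v, r u v → c u < c v} =
      ∑ I ∈ M.powerset, Nat.card {c : {w // w ∉ I} → Fin n // ∀ u v, r u.1 v.1 → c u < c v} := by
  rw [← Finset.sum_coe_sort, ← Nat.card_sigma]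
  symm
  let F : (Σ I : M.powerset, {c : {w // w ∉ I.1} → Fin n // ∀ u v, r u.1 v.1 → c u < c v}) →
      {c : W → Fin (n + 1) // ∀ u v, r u v → c u < c v} := fun x =>
    ⟨fun w => if h : w ∈ x.1.1 then 0 else (x.2.1 ⟨w, h⟩).succ, by
      intro u v huv
      have hv : v ∉ x.1.1 := fun hv =>
        (hM v).1 (Finset.mem_powerset.1 x.1.2 hv) u huv
      by_cases hu : u ∈ x.1.1
      · simp [hu, hv]
      · simp only [hu, hv, dite_false, Fin.succ_lt_succ_iff]
        exact x.2.2 _ _ huv⟩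
  refine Nat.card_eq_of_bijective F ⟨?_, ?_⟩
  · rintro ⟨⟨I, hI⟩, c, hc⟩ ⟨⟨J, hJ⟩, d, hd⟩ h
    have h' : ∀ w, (if h : w ∈ I then (0 : Fin (n+1)) else (c ⟨w, h⟩).succ) =
        if h : w ∈ J then 0 else (d ⟨w, h⟩).succ := fun w => congrFun (congrArg Subtype.val h) w
    have hIJ : I = J := by
      ext w
      have := h' w
      by_cases h1 : w ∈ I <;> by_cases h2 : w ∈ J <;> simp [h1, h2, Fin.succ_ne_zero] at this ⊢
      exact (Fin.succ_ne_zero _ this.symm).elim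
    subst hIJ
    have : c = d := by
      funext w
      have := h' w.1
      simpa [w.2] using this
    subst this
    rfl
  · rintro ⟨c, hc⟩
    refine ⟨⟨⟨Finset.univ.filter fun w => c w = 0, ?_⟩, ⟨fun w => (c w.1).pred (by
      simpa using w.2), ?_⟩⟩, ?_⟩
    · rw [Finset.mem_powerset]
      intro w hw
      rw [hM]
      intro v hv
      have := hc v w hv
      simp at hw
      simp [hw] at this
    · intro u v huv
      rw [Fin.pred_lt_pred_iff]
      exact hc _ _ huv
    · apply Subtype.ext
      funext w
      by_cases h : c w = 0 <;> simp [F, h]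

lemma strict_poly (k : ℕ) : ∀ {W : Type*} [Fintype W] (r : W → W → Prop),
    Fintype.card W = k → WellFounded r → ∃ P : ℚ[X],
    (∀ n : ℕ, P.eval (n : ℚ) = Nat.card {c : W → Fin n // ∀ u v, r u v → c u < c v}) ∧
    P.eval (-1) = (-1) ^ k := by
  induction k using Nat.strong_induction_on with
  | _ k ih =>
  intro W _ r hk hr
  classical
  by_cases hW : IsEmpty W
  · refine ⟨1, fun n => ?_, ?_⟩
    · have : Unique {c : W → Fin n // ∀ u v, r u v → c u < c v} :=
        { default := ⟨fun w => isEmptyElim w, fun w => isEmptyElim w⟩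
          uniq := fun c => Subtype.ext (funext fun w => isEmptyElim w) }
      simp
    · rw [← hk]; simp
  rw [not_isEmpty_iff] at hW
  let M : Finset W := Finset.univ.filter fun w => ∀ v, ¬ r v w
  have hM : ∀ w, w ∈ M ↔ ∀ v, ¬ r v w := by simp [M]
  have hMne : M.Nonempty := by
    obtain ⟨m, -, hm⟩ := hr.has_min Set.univ Set.univ_nonempty
    exact ⟨m, (hM m).2 fun v => hm v trivial⟩
  have key : ∀ I : Finset W, I.Nonempty → ∃ P : ℚ[X],
    (∀ n : ℕ, P.eval (n : ℚ) =
      Nat.card {c : {w // w ∉ I} → Fin n // ∀ u v, r u.1 v.1 → c u < c v}) ∧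
    P.eval (-1) = (-1) ^ k * (-1) ^ I.card := by
    intro I hI
    have hc : Fintype.card {w // w ∉ I} = k - I.card := by
      rw [Fintype.card_subtype_compl, hk]; simp
    have hle : I.card ≤ k := hk ▸ Finset.card_le_univ I
    have hpos := hI.card_pos
    obtain ⟨P, h1, h2⟩ := ih (k - I.card) (by omega) (W := {w // w ∉ I})
      (fun u v => r u.1 v.1) hc (InvImage.wf Subtype.val hr)
    refine ⟨P, h1, ?_⟩
    rw [h2]
    obtain ⟨j, rfl⟩ := Nat.exists_eq_add_of_le hle
    rw [Nat.add_sub_cancel_left, pow_add, mul_right_comm, ← pow_add, ← two_mul, pow_mul]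
    simp
  choose! P hP1 hP2 using key
  obtain ⟨R, hR0, hR⟩ := antidiff (∑ I ∈ M.powerset.erase ∅, P I)
  refine ⟨R, fun n => ?_, ?_⟩
  · induction n with
    | zero =>
      have : IsEmpty {c : W → Fin 0 // ∀ u v, r u v → c u < c v} :=
        ⟨fun c => (c.1 hW.some).elim0⟩
      simp [hR0]
    | succ n ihn =>
      push_cast
      rw [hR, ihn, strict_rec r n M hM, ← Finset.add_sum_erase _ _ (Finset.empty_mem_powerset M),
        eval_finsetSum]
      push_cast
      congr 1
      · congr 1
        refine Nat.card_congr (Equiv.subtypeEquiv (Equiv.arrowCongr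
          (Equiv.subtypeUnivEquiv (by simp)).symm (Equiv.refl _)) ?_)
        intro c
        simp [Equiv.arrowCongr, Equiv.subtypeUnivEquiv]
      · refine Finset.sum_congr rfl fun I hI => hP1 I ?_ n
        exact Finset.nonempty_iff_ne_empty.2 (Finset.ne_of_mem_erase hI)
  · have h := hR (-1)
    rw [neg_add_cancel, hR0, eval_finsetSum, Finset.sum_congr rfl (fun I hI => hP2 I
      (Finset.nonempty_iff_ne_empty.2 (Finset.ne_of_mem_erase hI))), ← Finset.mul_sum] at h
    have h2 : ∑ I ∈ M.powerset, (-1 : ℚ) ^ I.card = 0 := by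
      have := Finset.sum_powerset_neg_one_pow_card_of_nonempty hMne
      exact_mod_cast congrArg (Int.cast : ℤ → ℚ) this
    rw [← Finset.add_sum_erase _ _ (Finset.empty_mem_powerset M)] at h2
    simp only [Finset.card_empty, pow_zero] at h2
    have h3 := eq_neg_of_add_eq_zero_right h2
    rw [h3] at h
    linarith
end

lemma burnside_two {G X : Type*} [Group G] [Fintype G] [MulAction G X] [Finite X]
    (τ : G) (hτ : τ ≠ 1) (hG : ∀ g : G, g = 1 ∨ g = τ) :
    2 * Nat.card (MulAction.orbitRel.Quotient G X) =
      Nat.card X + Nat.card {x : X // τ • x = x} := by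
  classical
  have := Fintype.ofFinite X
  have hu : (Finset.univ : Finset G) = {1, τ} := by
    ext g; simpa using hG g
  have hc : Fintype.card G = 2 := by
    rw [← Finset.card_univ, hu, Finset.card_pair hτ.symm]
  have := MulAction.sum_card_fixedBy_eq_card_orbits_mul_card_group G X
  rw [hu, Finset.sum_pair hτ.symm, hc] at this
  simp only [Nat.card_eq_fintype_card]
  rw [mul_comm]
  refine Eq.trans ?_ (this.symm.trans ?_)
  · congr 1
  · congr 1
    · refine Fintype.card_congr (Equiv.subtypeUnivEquiv ?_)
      intro x; simp

lemma tau_sq {G : Type*} [Group G] (τ : G) (hτ : τ ≠ 1) (hG : ∀ g : G, g = 1 ∨ g = τ) :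
    τ * τ = 1 := by
  rcases hG (τ * τ) with h | h
  · exact h
  · exact (hτ (by simpa using h)).elim

lemma sign_orbits {G V : Type*} [Fintype V] [DecidableEq V] [Group G] [Fintype G]
    [MulAction G V] (τ : G) (hτ : τ ≠ 1) (hG : ∀ g : G, g = 1 ∨ g = τ)
    (hsgn : Equiv.Perm.sign (MulAction.toPerm τ : Equiv.Perm V) = -1) :
    (-1 : ℚ) ^ (Nat.card (MulAction.orbitRel.Quotient G V)) = - (-1) ^ (Fintype.card V) := by
  have hb := burnside_two (X := V) τ hτ hG
  have h2 : (MulAction.toPerm τ : Equiv.Perm V) ^ 2 = 1 := by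
    ext x
    simp [pow_two, smul_smul, tau_sq τ hτ hG]
  have : Fact (Nat.Prime 2) := ⟨Nat.prime_two⟩
  have hs := Equiv.Perm.sign_of_cycleType_eq_replicate two_pos
    (Equiv.Perm.cycleType_of_pow_prime_eq_one h2)
  rw [hsgn, if_neg (by decide)] at hs
  have hf : Fintype.card (Function.fixedPoints (MulAction.toPerm τ : Equiv.Perm V)) =
      Nat.card {x : V // τ • x = x} := by
    rw [← Nat.card_eq_fintype_card]; rfl
  rw [hf] at hs
  have hle : Nat.card {x : V // τ • x = x} ≤ Fintype.card V := by
    rw [← Nat.card_eq_fintype_card]; exact Finite.card_subtype_le _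
  rw [Nat.card_eq_fintype_card (α := V)] at hb
  set f := Nat.card {x : V // τ • x = x}
  set q := Nat.card (MulAction.orbitRel.Quotient G V)
  have hodd : Odd ((Fintype.card V - f) / 2) := by
    by_contra h
    rw [Nat.not_odd_iff_even] at h
    rw [h.neg_one_pow] at hs
    exact absurd hs (by decide)
  have : Fintype.card V = q + (Fintype.card V - f) / 2 := by omega
  rw [this, pow_add, hodd.neg_one_pow]; simp

section
variable {V : Type*} {Γ : SimpleGraph V}

lemma dirAdj_total (σ : GraphOri Γ) {u v : V} (h : Γ.Adj u v) :
    dirAdj Γ σ u v ∨ dirAdj Γ σ v u := by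
  have := σ.2 ⟨s(u, v), Γ.mem_edgeSet.mpr h⟩
  simp only [Sym2.mem_iff] at this
  rcases this with h1 | h1
  · right
    refine ⟨h.symm, ?_⟩
    refine Eq.trans ?_ h1
    exact congrArg σ.1 (Subtype.ext Sym2.eq_swap)
  · exact Or.inl ⟨h, h1⟩

lemma strict_proper (σ : GraphOri Γ) {n : ℕ} {c : V → Fin n}
    (hc : ∀ u v, dirAdj Γ σ u v → c u < c v) {u v : V} (h : Γ.Adj u v) : c u ≠ c v := by
  rcases dirAdj_total σ h with h | h
  · exact (hc _ _ h).ne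
  · exact (hc _ _ h).ne'

lemma dirAdj_iff (σ : GraphOri Γ) {n : ℕ} {c : V → Fin n}
    (hc : ∀ u v, dirAdj Γ σ u v → c u < c v) {u v : V} :
    dirAdj Γ σ u v ↔ Γ.Adj u v ∧ c u < c v := by
  constructor
  · exact fun h => ⟨h.1, hc _ _ h⟩
  · rintro ⟨h1, h2⟩
    rcases dirAdj_total σ h1 with h | h
    · exact h
    · exact absurd (hc _ _ h) h2.not_gt

lemma ori_ext {σ σ' : GraphOri Γ} (h : ∀ u v, dirAdj Γ σ u v → dirAdj Γ σ' u v) : σ = σ' := by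
  apply Subtype.ext
  funext ⟨e, he⟩
  induction e using Sym2.ind with
  | _ u v =>
  have hadj : Γ.Adj u v := he
  rcases dirAdj_total σ hadj with h1 | h1
  · exact h1.2.trans (h _ _ h1).2.symm
  · have h2 := h1.2.trans (h _ _ h1).2.symm
    have e : (⟨s(u, v), he⟩ : Γ.edgeSet) = ⟨s(v, u), Γ.mem_edgeSet.mpr hadj.symm⟩ :=
      Subtype.ext Sym2.eq_swap
    rw [e]; exact h2

lemma exists_ori {n : ℕ} {c : V → Fin n} (hc : ∀ u v, Γ.Adj u v → c u ≠ c v) :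
    ∃ σ : GraphOri Γ, oriAcyclic Γ σ ∧ ∀ u v, dirAdj Γ σ u v → c u < c v := by
  have key : ∀ e : Γ.edgeSet, ∃ v ∈ (e : Sym2 V), ∀ u ∈ (e : Sym2 V), c u ≤ c v := by
    rintro ⟨e, he⟩
    induction e using Sym2.ind with
    | _ u v =>
    rcases le_total (c u) (c v) with h | h
    · exact ⟨v, by simp, by simp [h]⟩
    · exact ⟨u, by simp, by simp [h]⟩
  choose f hf1 hf2 using key
  have hs : ∀ u v, dirAdj Γ ⟨f, hf1⟩ u v → c u < c v := by
    rintro u v ⟨h1, h2⟩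
    refine lt_of_le_of_ne ?_ (hc u v h1)
    have := hf2 ⟨s(u, v), Γ.mem_edgeSet.mpr h1⟩ u (by simp)
    simp only at h2
    rwa [h2] at this
  refine ⟨⟨f, hf1⟩, fun v hv => ?_, hs⟩
  have : ∀ {a b}, Relation.TransGen (dirAdj Γ ⟨f, hf1⟩) a b → c a < c b := by
    intro a b h
    induction h with
    | single h => exact hs _ _ h
    | tail _ h ih => exact ih.trans (hs _ _ h)
  exact lt_irrefl _ (this hv)

lemma acyclic_wf [Finite V] {σ : GraphOri Γ} (h : oriAcyclic Γ σ) : WellFounded (dirAdj Γ σ) := by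
  have : Std.Irrefl (Relation.TransGen (dirAdj Γ σ)) := ⟨h⟩
  have hw : WellFounded (Relation.TransGen (dirAdj Γ σ)) :=
    Finite.wellFounded_of_trans_of_irrefl _
  exact Subrelation.wf (fun h => Relation.TransGen.single h) hw

/-- A set of colorings is partitioned according to the induced orientation. -/
lemma card_colorings [Finite V] (n : ℕ) (A : GraphOri Γ → Prop) (B : (V → Fin n) → Prop)
    [Fintype {σ : GraphOri Γ // oriAcyclic Γ σ ∧ A σ}]
    (hAB : ∀ σ c, (∀ u v, dirAdj Γ σ u v → c u < c v) → B c → A σ) :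
    Nat.card {c : V → Fin n // (∀ u v, Γ.Adj u v → c u ≠ c v) ∧ B c} =
      ∑ σ : {σ : GraphOri Γ // oriAcyclic Γ σ ∧ A σ},
        Nat.card {c : V → Fin n // (∀ u v, dirAdj Γ σ.1 u v → c u < c v) ∧ B c} := by
  rw [← Nat.card_sigma]
  symm
  let F : (Σ σ : {σ : GraphOri Γ // oriAcyclic Γ σ ∧ A σ},
      {c : V → Fin n // (∀ u v, dirAdj Γ σ.1 u v → c u < c v) ∧ B c}) →
      {c : V → Fin n // (∀ u v, Γ.Adj u v → c u ≠ c v) ∧ B c} := fun x =>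
    ⟨x.2.1, fun _ _ h => strict_proper x.1.1 x.2.2.1 h, x.2.2.2⟩
  refine Nat.card_eq_of_bijective F ⟨?_, ?_⟩
  · rintro ⟨⟨σ, hσ⟩, c, hc⟩ ⟨⟨σ', hσ'⟩, d, hd⟩ h
    have h' : c = d := congrArg Subtype.val h
    subst h'
    have : σ = σ' := ori_ext fun u v h => (dirAdj_iff σ' hd.1).2 ((dirAdj_iff σ hc.1).1 h)
    subst this
    rfl
  · rintro ⟨c, hc, hB⟩
    obtain ⟨σ, h1, h2⟩ := exists_ori hc
    exact ⟨⟨⟨σ, h1, hAB σ c h2 hB⟩, ⟨c, h2, hB⟩⟩, rfl⟩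

variable {G : Type*} [Group G] [MulAction G V]
  {hact : ∀ (g : G) (u v : V), Γ.Adj u v → Γ.Adj (g • u) (g • v)}

lemma fixed_iff {g : G} {σ : GraphOri Γ} :
    oriSMulEq Γ hact g σ σ ↔ ∀ u v, dirAdj Γ σ u v → dirAdj Γ σ (g • u) (g • v) := by
  constructor
  · rintro h u v ⟨h1, h2⟩
    refine ⟨hact g u v h1, ?_⟩
    rw [h _ _ (hact g u v h1)]
    congr 1
    refine Eq.trans ?_ h2
    exact congrArg σ.1 (Subtype.ext (by simp only [inv_smul_smul]))
  · intro h u v huv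
    have hadj := hact g⁻¹ u v huv
    rcases dirAdj_total σ hadj with h1 | h1
    · have h3 := (h _ _ h1).2
      simp only [smul_inv_smul] at h3
      rw [h3, h1.2, smul_inv_smul]
    · have h3 := (h _ _ h1).2
      simp only [smul_inv_smul] at h3
      have e : (⟨s(u, v), Γ.mem_edgeSet.mpr huv⟩ : Γ.edgeSet) =
        ⟨s(v, u), Γ.mem_edgeSet.mpr huv.symm⟩ := Subtype.ext Sym2.eq_swap
      have e' : (⟨s(g⁻¹ • u, g⁻¹ • v), Γ.mem_edgeSet.mpr hadj⟩ : Γ.edgeSet) =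
        ⟨s(g⁻¹ • v, g⁻¹ • u), Γ.mem_edgeSet.mpr hadj.symm⟩ := Subtype.ext Sym2.eq_swap
      rw [e, e', h3, h1.2, smul_inv_smul]

/-- the relation on vertex orbits induced by an orientation -/
def orbRel (G : Type*) [Group G] [MulAction G V] (σ : GraphOri Γ)
    (a b : MulAction.orbitRel.Quotient G V) : Prop :=
  ∃ u v : V, Quotient.mk _ u = a ∧ Quotient.mk _ v = b ∧ dirAdj Γ σ u v

lemma orbRel_wf {σ : GraphOri Γ} (hw : WellFounded (dirAdj Γ σ))
    (hf : ∀ (g : G) u v, dirAdj Γ σ u v → dirAdj Γ σ (g • u) (g • v)) :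
    WellFounded (orbRel G σ) := by
  refine ⟨fun a => ?_⟩
  induction a using Quotient.inductionOn with
  | _ v =>
  induction v using hw.induction with
  | _ v ih =>
  refine ⟨_, ?_⟩
  rintro a ⟨u', v', rfl, hv, h⟩
  obtain ⟨g, hg⟩ : ∃ g : G, g • v' = v := by
    have := Quotient.exact hv.symm
    exact this
  have h2 := hf g _ _ h
  rw [hg] at h2
  have := ih _ h2
  have e : (Quotient.mk (MulAction.orbitRel G V) (g • u')) = Quotient.mk _ u' :=
    Quotient.sound ⟨g, rfl⟩
  rwa [e] at this

lemma card_fixed_strict (σ : GraphOri Γ) (n : ℕ) :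
    Nat.card {c : V → Fin n // (∀ u v, dirAdj Γ σ u v → c u < c v) ∧
        ∀ (g : G) x, c (g • x) = c x} =
      Nat.card {c : MulAction.orbitRel.Quotient G V → Fin n //
        ∀ a b, orbRel G σ a b → c a < c b} := by
  symm
  let F : {c : MulAction.orbitRel.Quotient G V → Fin n // ∀ a b, orbRel G σ a b → c a < c b} →
      {c : V → Fin n // (∀ u v, dirAdj Γ σ u v → c u < c v) ∧
        ∀ (g : G) x, c (g • x) = c x} := fun c =>
    ⟨fun v => c.1 (Quotient.mk _ v), fun u v h => c.2 _ _ ⟨u, v, rfl, rfl, h⟩,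
      fun g x => congrArg c.1 (Quotient.sound ⟨g, rfl⟩)⟩
  refine Nat.card_eq_of_bijective F ⟨?_, ?_⟩
  · rintro ⟨c, hc⟩ ⟨d, hd⟩ h
    apply Subtype.ext
    funext a
    induction a using Quotient.inductionOn with
    | _ v => exact congrFun (congrArg Subtype.val h) v
  · rintro ⟨c, hc, hi⟩
    refine ⟨⟨Quotient.lift c ?_, ?_⟩, rfl⟩
    · rintro a b ⟨g, rfl⟩
      exact hi g b
    · rintro _ _ ⟨u, v, rfl, rfl, h⟩
      exact hc u v h
end

lemma card_quot {V G : Type*} [Fintype V] [Group G] [Fintype G]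
    [MulAction G V] (Γ : SimpleGraph V)
    (hact : ∀ (g : G) (u v : V), Γ.Adj u v → Γ.Adj (g • u) (g • v))
    (τ : G) (hτ : τ ≠ 1) (hG : ∀ g : G, g = 1 ∨ g = τ) (n : ℕ) :
    2 * Nat.card (Quot (fun c c' : {c : V → Fin n // ∀ u v : V, Γ.Adj u v → c u ≠ c v} =>
          ∃ g : G, ∀ x : V, c'.1 x = c.1 (g⁻¹ • x))) =
      Nat.card {c : V → Fin n // (∀ u v : V, Γ.Adj u v → c u ≠ c v) ∧ True} +
      Nat.card {c : V → Fin n // (∀ u v : V, Γ.Adj u v → c u ≠ c v) ∧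
        ∀ (g : G) x, c (g • x) = c x} := by
  let _ : MulAction G {c : V → Fin n // ∀ u v : V, Γ.Adj u v → c u ≠ c v} :=
    { smul := fun g c => ⟨fun x => c.1 (g⁻¹ • x), fun u v h => c.2 _ _ (hact g⁻¹ u v h)⟩
      one_smul := fun c => Subtype.ext (funext fun x => by
        change c.1 ((1 : G)⁻¹ • x) = c.1 x
        simp)
      mul_smul := fun g h c => Subtype.ext (funext fun x => by
        change c.1 ((g * h)⁻¹ • x) = c.1 (h⁻¹ • g⁻¹ • x)
        simp [mul_smul]) }
  have hsm : ∀ (g : G) (c : {c : V → Fin n // ∀ u v : V, Γ.Adj u v → c u ≠ c v}) x,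
    (g • c).1 x = c.1 (g⁻¹ • x) := fun _ _ _ => rfl
  have hinv : τ⁻¹ = τ := inv_eq_of_mul_eq_one_left (tau_sq τ hτ hG)
  have hb := burnside_two (X := {c : V → Fin n // ∀ u v : V, Γ.Adj u v → c u ≠ c v}) τ hτ hG
  refine Eq.trans ?_ (hb.trans ?_)
  · congr 1
    refine Nat.card_congr (Quot.congrRight ?_)
    intro c c'
    change _ ↔ c ∈ MulAction.orbit G c'
    rw [MulAction.mem_orbit_symm]
    constructor
    · rintro ⟨g, hg⟩
      exact ⟨g, Subtype.ext (funext fun x => (hg x).symm)⟩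
    · rintro ⟨g, rfl⟩
      exact ⟨g, fun x => rfl⟩
  · congr 1
    · simp
    · refine Nat.card_congr ((Equiv.subtypeSubtypeEquivSubtypeInter _ _).symm.trans
        (Equiv.subtypeEquivRight ?_)).symm
      intro c
      constructor
      · intro h
        exact Subtype.ext (funext fun x => by rw [hsm, h])
      · intro h g x
        rcases hG g with rfl | rfl
        · simp
        · have := congrFun (congrArg Subtype.val h) x
          rwa [hsm, hinv] at this

theorem stmt_16 {V G : Type*} [Fintype V] [DecidableEq V] [Group G] [Fintype G]
    [MulAction G V] (Γ : SimpleGraph V)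
    (hact : ∀ (g : G) (u v : V), Γ.Adj u v → Γ.Adj (g • u) (g • v))
    (τ : G) (hτ : τ ≠ 1) (hG : ∀ g : G, g = 1 ∨ g = τ)
    (hsgn : Equiv.Perm.sign (MulAction.toPerm τ : Equiv.Perm V) = -1)
    (p : Polynomial ℚ)
    (hp : ∀ n : ℕ, 1 ≤ n →
      p.eval (n : ℚ) =
        Nat.card (Quot (fun c c' : {c : V → Fin n // ∀ u v : V, Γ.Adj u v → c u ≠ c v} =>
          ∃ g : G, ∀ x : V, c'.1 x = c.1 (g⁻¹ • x)))) :
    p.eval (-1 : ℚ) = (-1) ^ (Fintype.card V) *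
      (Nat.card {σ : GraphOri Γ // oriAcyclic Γ σ ∧
        ∀ g : G, oriSMulEq Γ hact g σ σ →
          Equiv.Perm.sign (MulAction.toPerm g : Equiv.Perm V) = 1} : ℚ) / 2 := by
  classical
  have : Finite (GraphOri Γ) := by unfold GraphOri; infer_instance
  have : Fintype (GraphOri Γ) := Fintype.ofFinite _
  have : Fintype (MulAction.orbitRel.Quotient G V) := Fintype.ofFinite _
  let Fx : GraphOri Γ → Prop := fun σ =>
    ∀ (g : G) u v, dirAdj Γ σ u v → dirAdj Γ σ (g • u) (g • v)
  have h1 : ∀ σ : {σ : GraphOri Γ // oriAcyclic Γ σ ∧ True}, ∃ P : Polynomial ℚ,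
      (∀ n : ℕ, P.eval (n : ℚ) =
        Nat.card {c : V → Fin n // (∀ u v, dirAdj Γ σ.1 u v → c u < c v) ∧ True}) ∧
      P.eval (-1) = (-1) ^ Fintype.card V := by
    intro σ
    simp only [and_true]
    exact strict_poly _ _ rfl (acyclic_wf σ.2.1)
  have h2 : ∀ σ : {σ : GraphOri Γ // oriAcyclic Γ σ ∧ Fx σ}, ∃ P : Polynomial ℚ,
      (∀ n : ℕ, P.eval (n : ℚ) =
        Nat.card {c : V → Fin n // (∀ u v, dirAdj Γ σ.1 u v → c u < c v) ∧
          ∀ (g : G) x, c (g • x) = c x}) ∧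
      P.eval (-1) = - (-1) ^ Fintype.card V := by
    intro σ
    simp only [card_fixed_strict]
    rw [← sign_orbits τ hτ hG hsgn, Nat.card_eq_fintype_card]
    exact strict_poly _ _ rfl (orbRel_wf (acyclic_wf σ.2.1) σ.2.2)
  choose P hP hP' using h1
  choose Q hQ hQ' using h2
  have hpoly : 2 * p = ∑ σ, P σ + ∑ σ, Q σ := by
    apply Polynomial.eq_of_infinite_eval_eq
    refine Set.Infinite.mono (s := Set.range fun n : ℕ => ((n + 1 : ℕ) : ℚ)) ?_
      (Set.infinite_range_of_injective fun a b h => by simpa using h)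
    rintro _ ⟨n, rfl⟩
    have hm1 : 1 ≤ n + 1 := by omega
    simp only []
    generalize n + 1 = m at hm1
    have hc := card_quot Γ hact τ hτ hG m
    rw [card_colorings m (fun _ => True) (fun _ => True) (fun _ _ _ _ => trivial),
      card_colorings m Fx (fun c => ∀ (g : G) x, c (g • x) = c x) ?_] at hc
    · have hc' := congrArg (Nat.cast : ℕ → ℚ) hc
      rw [Nat.cast_mul, ← hp m hm1, Nat.cast_add, Nat.cast_sum, Nat.cast_sum] at hc'
      simp only [Set.mem_setOf_eq, Polynomial.eval_add, Polynomial.eval_finsetSum,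
        Polynomial.eval_mul, hP, hQ]
      rw [← hc']
      simp
    · intro σ c hs hi g u v h
      rw [dirAdj_iff σ hs] at h ⊢
      refine ⟨hact g u v h.1, ?_⟩
      rw [hi, hi]; exact h.2
  have hev := congrArg (Polynomial.eval (-1)) hpoly
  simp only [Polynomial.eval_add, Polynomial.eval_finsetSum, Polynomial.eval_mul, hP', hQ',
    Finset.sum_const, Finset.card_univ, nsmul_eq_mul, Polynomial.eval_ofNat] at hev
  have hplus : ∀ σ : GraphOri Γ, (∀ g : G, oriSMulEq Γ hact g σ σ →
      Equiv.Perm.sign (MulAction.toPerm g : Equiv.Perm V) = 1) ↔ ¬ Fx σ := by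
    intro σ
    constructor
    · intro h hF
      have := h τ (fixed_iff.2 (hF τ))
      rw [hsgn] at this
      exact absurd this (by decide)
    · intro h g hg
      rcases hG g with rfl | rfl
      · have : (MulAction.toPerm (1 : G) : Equiv.Perm V) = 1 := by ext; simp
        simp [this]
      · refine (h fun g' => ?_).elim
        rcases hG g' with rfl | rfl
        · simp
        · exact fixed_iff.1 hg
  have hcard : Fintype.card {σ : GraphOri Γ // oriAcyclic Γ σ ∧ True} =
      Fintype.card {σ : GraphOri Γ // oriAcyclic Γ σ ∧ Fx σ} +
      Nat.card {σ : GraphOri Γ // oriAcyclic Γ σ ∧ ∀ g : G, oriSMulEq Γ hact g σ σ →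
          Equiv.Perm.sign (MulAction.toPerm g : Equiv.Perm V) = 1} := by
    simp only [hplus, and_true, Nat.card_eq_fintype_card, Fintype.card_subtype]
    rw [← Finset.filter_filter, ← Finset.filter_filter, Finset.card_filter_add_card_filter_not]
  rw [hcard] at hev
  push_cast at hev
  linarith
end

section
/- Let k > 2 be odd and let C^k be the cycle graph on vertices {x_i}_{i∈Z_k}, acted on by the dihedral group D_k of order 2k (generated by the rotation r·x_i = x_{i+1} and the reflection s·x_i = x_{-i}) and by its cyclic subgroup Z_k = ⟨r⟩. Then for all n ≥ 1, the number of D_k-orbits of proper n-colorings is half the number of Z_k-orbits: χ_{C^k,D_k}(n) = (1/2) · χ_{C^k,Z_k}(n). In particular, if k = p > 2 is prime, |Col_n(C^p)/D_p| = (1/(2p)) · |Col_n(C^p)| for all n ≥ 1. -/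
theorem aux_smul_r (k : ℕ) (hk : 2 < k) [MulAction (DihedralGroup k) (ZMod k)]
    (hr : ∀ x : ZMod k, (DihedralGroup.r 1 : DihedralGroup k) • x = x + 1)
    (i x : ZMod k) : (DihedralGroup.r i : DihedralGroup k) • x = x + i := by
  haveI : NeZero k := ⟨by omega⟩
  have h : ∀ m : ℕ, ∀ x : ZMod k, (DihedralGroup.r (m : ZMod k) : DihedralGroup k) • x = x + m := by
    intro m
    induction m with
    | zero => intro x; simp [DihedralGroup.r_zero]
    | succ m ih =>
      intro x
      have : (DihedralGroup.r ((m + 1 : ℕ) : ZMod k) : DihedralGroup k)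
          = DihedralGroup.r 1 * DihedralGroup.r (m : ZMod k) := by
        rw [DihedralGroup.r_mul_r]; push_cast; rw [add_comm]
      rw [this, mul_smul, ih, hr]; push_cast; ring
  have := h i.val x
  rwa [ZMod.natCast_zmod_val] at this

theorem aux_smul_sr (k : ℕ) (hk : 2 < k) [MulAction (DihedralGroup k) (ZMod k)]
    (hr : ∀ x : ZMod k, (DihedralGroup.r 1 : DihedralGroup k) • x = x + 1)
    (hs : ∀ x : ZMod k, (DihedralGroup.sr 0 : DihedralGroup k) • x = -x)
    (i x : ZMod k) : (DihedralGroup.sr i : DihedralGroup k) • x = -(x + i) := by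
  have : (DihedralGroup.sr i : DihedralGroup k) = DihedralGroup.sr 0 * DihedralGroup.r i := by
    rw [DihedralGroup.sr_mul_r, zero_add]
  rw [this, mul_smul, hs, aux_smul_r k hk hr]

theorem aux_r_mem (k : ℕ) (hk : 2 < k) (i : ZMod k) :
    (DihedralGroup.r i : DihedralGroup k) ∈ Subgroup.zpowers (DihedralGroup.r 1) := by
  haveI : NeZero k := ⟨by omega⟩
  refine ⟨(i.val : ℤ), ?_⟩
  simp

theorem aux_burnside {G X : Type*} [Group G] [Fintype G] [Finite X] [MulAction G X] (H : Subgroup G)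
    (hfree : ∀ g : G, g ∉ H → ∀ x : X, g • x ≠ x) :
    Nat.card (Quotient (MulAction.orbitRel G X)) * Nat.card G
      = Nat.card (Quotient (MulAction.orbitRel H X)) * Nat.card H := by
  classical
  haveI := Fintype.ofFinite X
  haveI : Fintype (Quotient (MulAction.orbitRel G X)) := Fintype.ofFinite _
  haveI : Fintype (Quotient (MulAction.orbitRel H X)) := Fintype.ofFinite _
  have h1 := MulAction.sum_card_fixedBy_eq_card_orbits_mul_card_group G X
  have h2 := MulAction.sum_card_fixedBy_eq_card_orbits_mul_card_group H X
  simp only [Nat.card_eq_fintype_card]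
  rw [← h1, ← h2]
  symm
  rw [← Finset.sum_subset (Finset.subset_univ (Finset.univ.filter (· ∈ H)))]
  · rw [Finset.sum_subtype (p := (· ∈ H)) (F := inferInstance) _ (by simp)]
    rfl
  · intro g _ hg
    simp only [Finset.mem_filter, Finset.mem_univ, true_and] at hg
    rw [Fintype.card_eq_zero_iff]
    exact ⟨fun x => hfree g hg x.1 x.2⟩

theorem aux_adj (k : ℕ) (hk : 2 < k) [MulAction (DihedralGroup k) (ZMod k)]
    (hr : ∀ x : ZMod k, (DihedralGroup.r 1 : DihedralGroup k) • x = x + 1)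
    (hs : ∀ x : ZMod k, (DihedralGroup.sr 0 : DihedralGroup k) • x = -x)
    (g : DihedralGroup k) (u v : ZMod k)
    (h : (SimpleGraph.fromRel (fun i j : ZMod k => j = i + 1)).Adj u v) :
    (SimpleGraph.fromRel (fun i j : ZMod k => j = i + 1)).Adj (g • u) (g • v) := by
  rw [SimpleGraph.fromRel_adj] at h ⊢
  refine ⟨fun e => h.1 (MulAction.injective g e), ?_⟩
  cases g with
  | r i =>
    simp only [aux_smul_r k hk hr]
    rcases h.2 with h | h
    · left; rw [h]; ring
    · right; rw [h]; ring
  | sr i =>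
    simp only [aux_smul_sr k hk hr hs]
    rcases h.2 with h | h
    · right; rw [h]; ring
    · left; rw [h]; ring

/-- Proper colorings. -/
abbrev AuxCol (k n : ℕ) := {c : ZMod k → Fin n //
          ∀ u v : ZMod k, (SimpleGraph.fromRel (fun i j : ZMod k => j = i + 1)).Adj u v →
            c u ≠ c v}

/-- The action on proper colorings. -/
@[reducible] def auxAct (k n : ℕ) (hk : 2 < k) [MulAction (DihedralGroup k) (ZMod k)]
    (hr : ∀ x : ZMod k, (DihedralGroup.r 1 : DihedralGroup k) • x = x + 1)
    (hs : ∀ x : ZMod k, (DihedralGroup.sr 0 : DihedralGroup k) • x = -x) :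
    MulAction (DihedralGroup k) (AuxCol k n) where
  smul g c := ⟨fun x => c.1 (g⁻¹ • x), fun u v h => c.2 _ _ (aux_adj k hk hr hs g⁻¹ u v h)⟩
  one_smul c := by
    apply Subtype.ext; funext x
    change c.1 ((1 : DihedralGroup k)⁻¹ • x) = c.1 x
    rw [inv_one, one_smul]
  mul_smul g h c := by
    apply Subtype.ext; funext x
    change c.1 ((g * h)⁻¹ • x) = c.1 (h⁻¹ • g⁻¹ • x)
    rw [mul_inv_rev, mul_smul]

theorem aux_adj_succ (k : ℕ) (hk : 2 < k) (x : ZMod k) :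
    (SimpleGraph.fromRel (fun i j : ZMod k => j = i + 1)).Adj x (x + 1) := by
  haveI : Fact (1 < k) := ⟨by omega⟩
  rw [SimpleGraph.fromRel_adj]
  exact ⟨by simp, Or.inl rfl⟩

theorem aux_sr_free (k n : ℕ) (hk : 2 < k) (hodd : Odd k) [MulAction (DihedralGroup k) (ZMod k)]
    (hr : ∀ x : ZMod k, (DihedralGroup.r 1 : DihedralGroup k) • x = x + 1)
    (hs : ∀ x : ZMod k, (DihedralGroup.sr 0 : DihedralGroup k) • x = -x)
    (i : ZMod k) (c : AuxCol k n)
    (h : ∀ x, c.1 ((DihedralGroup.sr i : DihedralGroup k)⁻¹ • x) = c.1 x) : False := by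
  obtain ⟨m, hm⟩ := hodd
  have h2 : (2 : ZMod k) * (-m) = 1 := by
    have : ((2 * m + 1 : ℕ) : ZMod k) = 0 := by rw [← hm]; simp
    push_cast at this
    linear_combination -this
  set y : ZMod k := (-m) * (-1 - i) with hy
  have := h y
  rw [DihedralGroup.inv_sr, aux_smul_sr k hk hr hs] at this
  have e : -(y + i) = y + 1 := by
    rw [hy]; linear_combination (1 + i) * h2
  rw [e] at this
  exact c.2 _ _ (aux_adj_succ k hk y) this.symm

theorem aux_r_free (k n : ℕ) (hk : 2 < k) (hp : k.Prime) [MulAction (DihedralGroup k) (ZMod k)]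
    (hr : ∀ x : ZMod k, (DihedralGroup.r 1 : DihedralGroup k) • x = x + 1)
    (i : ZMod k) (hi : i ≠ 0) (c : AuxCol k n)
    (h : ∀ x, c.1 ((DihedralGroup.r i : DihedralGroup k)⁻¹ • x) = c.1 x) : False := by
  haveI : Fact k.Prime := ⟨hp⟩
  simp only [DihedralGroup.inv_r, aux_smul_r k hk hr] at h
  have h' : ∀ m : ℕ, c.1 (0 + m * (-i)) = c.1 0 := by
    intro m
    induction m with
    | zero => simp
    | succ m ih =>
      rw [← ih, ← h (0 + m * (-i))]
      congr 1; push_cast; ring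
  have := h' (-i⁻¹).val
  rw [ZMod.natCast_zmod_val] at this
  rw [show 0 + (-i⁻¹) * (-i) = (0 : ZMod k) + 1 by field_simp] at this
  exact c.2 _ _ (aux_adj_succ k hk 0) this.symm

theorem aux_card_quot {G X : Type*} [Group G] [MulAction G X] (R : X → X → Prop)
    (hR : ∀ x y, R x y ↔ ∃ g : G, g • x = y) :
    Nat.card (Quot R) = Nat.card (Quotient (MulAction.orbitRel G X)) := by
  refine Nat.card_congr (Quot.congr (Equiv.refl X) ?_)
  intro x y
  rw [hR]
  change _ ↔ (MulAction.orbitRel G X) x y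
  rw [Setoid.comm', MulAction.orbitRel_apply]
  rfl

/-- Let `k > 2` be odd and let `C^k` be the cycle graph on the vertices
`{x_i}_{i ∈ Z_k}` (here the vertex set is `ZMod k` with `i ~ i+1`), acted on by the
dihedral group `D_k` of order `2k` — the action being determined by the rotation
`r • x = x + 1` and the reflection `s • x = -x` — and by its cyclic subgroup
`Z_k = ⟨r⟩`.  Then for all `n ≥ 1`, the number of `D_k`-orbits of proper `n`-colorings is
half the number of `Z_k`-orbits: `χ_{C^k,D_k}(n) = (1/2) · χ_{C^k,Z_k}(n)`.  In
particular, if `k = p > 2` is prime, `|Col_n(C^p)/D_p| = (1/(2p)) · |Col_n(C^p)|` for all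
`n ≥ 1`. -/
theorem stmt_19 (k : ℕ) (hk : 2 < k) (hodd : Odd k)
    [MulAction (DihedralGroup k) (ZMod k)]
    (hr : ∀ x : ZMod k, (DihedralGroup.r 1 : DihedralGroup k) • x = x + 1)
    (hs : ∀ x : ZMod k, (DihedralGroup.sr 0 : DihedralGroup k) • x = -x) :
    (∀ n : ℕ, 1 ≤ n →
      (Nat.card (Quot (fun c c' : {c : ZMod k → Fin n //
          ∀ u v : ZMod k, (SimpleGraph.fromRel (fun i j : ZMod k => j = i + 1)).Adj u v →
            c u ≠ c v} =>
        ∃ g : DihedralGroup k, ∀ x : ZMod k, c'.1 x = c.1 (g⁻¹ • x))) : ℚ) =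
      (1 / 2 : ℚ) *
        Nat.card (Quot (fun c c' : {c : ZMod k → Fin n //
            ∀ u v : ZMod k, (SimpleGraph.fromRel (fun i j : ZMod k => j = i + 1)).Adj u v →
              c u ≠ c v} =>
          ∃ g : DihedralGroup k, g ∈ Subgroup.zpowers (DihedralGroup.r 1 : DihedralGroup k) ∧
            ∀ x : ZMod k, c'.1 x = c.1 (g⁻¹ • x)))) ∧
    (k.Prime → ∀ n : ℕ, 1 ≤ n →
      (Nat.card (Quot (fun c c' : {c : ZMod k → Fin n //
          ∀ u v : ZMod k, (SimpleGraph.fromRel (fun i j : ZMod k => j = i + 1)).Adj u v →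
            c u ≠ c v} =>
        ∃ g : DihedralGroup k, ∀ x : ZMod k, c'.1 x = c.1 (g⁻¹ • x))) : ℚ) =
      (1 / (2 * k) : ℚ) *
        Nat.card {c : ZMod k → Fin n //
          ∀ u v : ZMod k, (SimpleGraph.fromRel (fun i j : ZMod k => j = i + 1)).Adj u v →
            c u ≠ c v}) := by
  haveI : NeZero k := ⟨by omega⟩
  have hcol : ∀ (n : ℕ) (g : DihedralGroup k) (c d : AuxCol k n),
      (letI := auxAct k n hk hr hs; g • c = d) ↔ ∀ x, d.1 x = c.1 (g⁻¹ • x) := by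
    intro n g c d
    constructor
    · rintro h x; rw [← h]; rfl
    · intro h; apply Subtype.ext; funext x; exact (h x).symm
  have hG : ∀ n : ℕ, Nat.card (Quot (fun c c' : AuxCol k n =>
      ∃ g : DihedralGroup k, ∀ x : ZMod k, c'.1 x = c.1 (g⁻¹ • x))) =
      (letI := auxAct k n hk hr hs;
        Nat.card (Quotient (MulAction.orbitRel (DihedralGroup k) (AuxCol k n)))) := by
    intro n
    letI := auxAct k n hk hr hs
    apply aux_card_quot
    intro c d
    exact exists_congr fun g => (hcol n g c d).symm
  have hcard : Nat.card (DihedralGroup k) = 2 * k := DihedralGroup.nat_card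
  have hk0 : (k : ℚ) ≠ 0 := by exact_mod_cast (NeZero.ne k)
  constructor
  · intro n _
    letI := auxAct k n hk hr hs
    have hH : Nat.card (Quot (fun c c' : AuxCol k n =>
        ∃ g : DihedralGroup k, g ∈ Subgroup.zpowers (DihedralGroup.r 1 : DihedralGroup k) ∧
            ∀ x : ZMod k, c'.1 x = c.1 (g⁻¹ • x))) =
        Nat.card (Quotient (MulAction.orbitRel
          (Subgroup.zpowers (DihedralGroup.r 1 : DihedralGroup k)) (AuxCol k n))) := by
      apply aux_card_quot
      intro c d
      constructor
      · rintro ⟨g, hg, h⟩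
        exact ⟨⟨g, hg⟩, (hcol n g c d).2 h⟩
      · rintro ⟨⟨g, hg⟩, h⟩
        exact ⟨g, hg, (hcol n g c d).1 h⟩
    rw [hG n, hH]
    have hb := aux_burnside (X := AuxCol k n)
      (Subgroup.zpowers (DihedralGroup.r 1 : DihedralGroup k)) (by
        intro g hg c h
        cases g with
        | r i => exact hg (aux_r_mem k hk i)
        | sr i => exact aux_sr_free k n hk hodd hr hs i c (fun x => ((hcol n _ c c).1 h x).symm))
    rw [hcard, Nat.card_zpowers, DihedralGroup.orderOf_r_one] at hb
    have hb' := congrArg (Nat.cast (R := ℚ)) hb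
    push_cast at hb'
    apply mul_right_cancel₀ hk0
    linear_combination (1 / 2) * hb'
  · intro hp n _
    letI := auxAct k n hk hr hs
    rw [hG n]
    have hb := aux_burnside (X := AuxCol k n) (⊥ : Subgroup (DihedralGroup k)) (by
        intro g hg c h
        cases g with
        | r i =>
          refine aux_r_free k n hk hp hr i ?_ c (fun x => ((hcol n _ c c).1 h x).symm)
          rintro rfl
          exact hg (by rw [Subgroup.mem_bot]; rfl)
        | sr i => exact aux_sr_free k n hk hodd hr hs i c (fun x => ((hcol n _ c c).1 h x).symm))
    have hbot : Nat.card (Quotient (MulAction.orbitRel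
        (⊥ : Subgroup (DihedralGroup k)) (AuxCol k n))) = Nat.card (AuxCol k n) := by
      rw [← aux_card_quot (G := (⊥ : Subgroup (DihedralGroup k))) (X := AuxCol k n) (· = ·)]
      · exact Nat.card_congr
          ⟨Quot.lift id (fun _ _ h => h), Quot.mk _, by rintro ⟨x⟩; rfl, fun _ => rfl⟩
      · intro x y
        constructor
        · rintro rfl; exact ⟨1, one_smul _ _⟩
        · rintro ⟨g, h⟩
          rw [Subsingleton.elim g 1, one_smul] at h
          exact h
    rw [hcard, hbot, Subgroup.card_bot, mul_one] at hb
    rw [← hb]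
    push_cast
    field_simp
end
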